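/- arXiv:1912.05424 — 2 statements merged into one kernel-verified Lean document; each statement's English description precedes it below -/
import Mathlib

section
/- Let K be a field and n ≥ 3. Then SL_n(K[x_1^{±1},…,x_m^{±1}]) = E_n(K[x_1^{±1},…,x_m^{±1}]) for every m ≥ 1; that is, every Laurent polynomial matrix of determinant 1 over a field is a product of elementary matrices. -/
/-- The elementary subgroup `E_n(R) ⊆ SL_n(R)`. -/
def elemSL (n : ℕ) (R : Type*) [CommRing R] :
    Subgroup (Matrix.SpecialLinearGroup (Fin n) R) :=
  Subgroup.closure {g | ∃ (i j : Fin n) (a : R), i ≠ j ∧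
    (g : Matrix (Fin n) (Fin n) R) = Matrix.transvection i j a}

/-- The Laurent polynomial ring `K[x₁^{±1},…,x_m^{±1}]`, as the group algebra of `ℤ^m`. -/
abbrev LaurentRing (A : Type*) [CommRing A] (m : ℕ) : Type _ :=
  AddMonoidAlgebra A (Fin m →₀ ℤ)

section part1
open Matrix Polynomial
/-- Elementary matrices, as a submonoid of all square matrices. -/
def El (ι R : Type*) [Fintype ι] [DecidableEq ι] [CommRing R] : Submonoid (Matrix ι ι R) :=
  Submonoid.closure {M | ∃ (i j : ι) (c : R), i ≠ j ∧ M = Matrix.transvection i j c}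

section basics
variable {ι R S : Type*} [Fintype ι] [DecidableEq ι] [CommRing R] [CommRing S]

lemma El.tv {i j : ι} (h : i ≠ j) (c : R) : Matrix.transvection i j c ∈ El ι R :=
  Submonoid.subset_closure ⟨i, j, c, h, rfl⟩

lemma El.exists_inv {M : Matrix ι ι R} (h : M ∈ El ι R) :
    ∃ N ∈ El ι R, N * M = 1 ∧ M * N = 1 := by
  induction h using Submonoid.closure_induction with
  | mem x hx =>
    obtain ⟨i, j, c, hij, rfl⟩ := hx
    refine ⟨Matrix.transvection i j (-c), El.tv hij _, ?_, ?_⟩ <;>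
    simp [Matrix.transvection_mul_transvection_same _ _ hij]
  | one => exact ⟨1, one_mem _, by simp, by simp⟩
  | mul x y _ _ hx hy =>
    obtain ⟨x', hx', h1, h2⟩ := hx
    obtain ⟨y', hy', h3, h4⟩ := hy
    refine ⟨y' * x', mul_mem hy' hx', ?_, ?_⟩
    · calc y' * x' * (x * y) = y' * (x' * x) * y := by simp only [mul_assoc]
        _ = 1 := by rw [h1, mul_one, h3]
    · calc x * y * (y' * x') = x * (y * y') * x' := by simp only [mul_assoc]
        _ = 1 := by rw [h4, mul_one, h2]

lemma tv_map (f : R →+* S) (i j : ι) (c : R) :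
    (Matrix.transvection i j c).map f = Matrix.transvection i j (f c) := by
  ext a b
  simp [Matrix.transvection, Matrix.add_apply, Matrix.one_apply, Matrix.single_apply, apply_ite f]

lemma El.map (f : R →+* S) {M : Matrix ι ι R} (h : M ∈ El ι R) : M.map f ∈ El ι S := by
  induction h using Submonoid.closure_induction with
  | mem x hx =>
    obtain ⟨i, j, c, hij, rfl⟩ := hx
    rw [tv_map]
    exact El.tv hij _
  | one => rw [Matrix.map_one f (map_zero f) (map_one f)]; exact one_mem _
  | mul x y _ _ hx hy => rw [Matrix.map_mul]; exact mul_mem hx hy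

lemma El.of_mul_left {M N : Matrix ι ι R} (hM : M ∈ El ι R) (h : M * N ∈ El ι R) : N ∈ El ι R := by
  obtain ⟨M', hM', h1, h2⟩ := El.exists_inv hM
  have : N = M' * (M * N) := by rw [← mul_assoc, h1, one_mul]
  rw [this]; exact mul_mem hM' h

lemma El.of_mul_right {M N : Matrix ι ι R} (hM : M ∈ El ι R) (h : N * M ∈ El ι R) : N ∈ El ι R := by
  obtain ⟨M', hM', h1, h2⟩ := El.exists_inv hM
  have : N = (N * M) * M' := by rw [mul_assoc, h2, mul_one]
  rw [this]; exact mul_mem h hM'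

lemma El.col (l : ι) (x : ι → R) (hx : x l = 0) :
    1 + vecMulVec x (Pi.single l 1) ∈ El ι R := by
  have key : ∀ s : Finset ι, 1 + vecMulVec (fun i => if i ∈ s then x i else 0) (Pi.single l 1)
      ∈ El ι R := by
    intro s
    induction s using Finset.induction_on with
    | empty => 
      have : vecMulVec (fun i => if i ∈ (∅ : Finset ι) then x i else 0) (Pi.single l (1 : R)) = 0 := by
        ext a b; simp [vecMulVec_apply]
      rw [this, add_zero]; exact one_mem _
    | insert a s ha ih =>
      by_cases hal : a = l
      · subst hal
        convert ih using 3
        ext i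
        by_cases hi : i = a
        · subst hi; simp [hx]
        · simp [hi]
      · have : 1 + vecMulVec (fun i => if i ∈ insert a s then x i else 0) (Pi.single l (1 : R))
          = Matrix.transvection a l (x a) *
            (1 + vecMulVec (fun i => if i ∈ s then x i else 0) (Pi.single l 1)) := by
          ext p q
          by_cases hp : p = a
          · subst hp
            rw [Matrix.transvection_mul_apply_same]
            by_cases hq : q = l
            · subst hq
              simp [vecMulVec_apply, ha, Matrix.one_apply, hx]
            · simp [vecMulVec_apply, ha, Matrix.one_apply, hq, Ne.symm hq]
          · rw [Matrix.transvection_mul_apply_of_ne _ _ _ _ hp]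
            simp [vecMulVec_apply, hp]
        rw [this]; exact mul_mem (El.tv hal _) ih
  simpa using key Finset.univ

lemma El.transpose {M : Matrix ι ι R} (h : M ∈ El ι R) : Mᵀ ∈ El ι R := by
  induction h using Submonoid.closure_induction with
  | mem x hx =>
    obtain ⟨i, j, c, hij, rfl⟩ := hx
    have : (Matrix.transvection i j c)ᵀ = Matrix.transvection j i c := by
      simp [Matrix.transvection]
    rw [this]
    exact El.tv hij.symm _
  | one => rw [Matrix.transpose_one]; exact one_mem _
  | mul x y _ _ hx hy => rw [Matrix.transpose_mul]; exact mul_mem hy hx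

lemma El.row (l : ι) (r : ι → R) (hr : r l = 0) :
    1 + vecMulVec (Pi.single l 1) r ∈ El ι R := by
  have := El.transpose (El.col l r hr)
  rwa [Matrix.transpose_add, Matrix.transpose_one, transpose_vecMulVec] at this

lemma one_add_vecMulVec_mul (x r y t : ι → R) :
    (1 + vecMulVec x r) * (1 + vecMulVec y t) =
      1 + vecMulVec x r + vecMulVec y t + (r ⬝ᵥ y) • vecMulVec x t := by
  rw [add_mul, mul_add, mul_add, vecMulVec_mul_vecMulVec, one_mul, one_mul, mul_one]
  simp only [← add_assoc, vecMulVec_smul, smul_vecMulVec]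
  abel

lemma El.key0 (l : ι) (x r : ι → R) (hx : x l = 0) (hr : r l = 0) (h : r ⬝ᵥ x = 0) :
    1 + vecMulVec x r ∈ El ι R := by
  have e1 := El.col l x hx
  have e2 := El.row l r hr
  have e3 := El.col l (-x) (by simp [hx])
  have e4 := El.row l (-r) (by simp [hr])
  have := mul_mem (mul_mem e1 e2) (mul_mem e3 e4)
  convert this using 1
  rw [one_add_vecMulVec_mul, one_add_vecMulVec_mul]
  simp only [neg_vecMulVec, vecMulVec_neg, dotProduct_neg, single_dotProduct, Pi.single_eq_same,
    hx, hr, mul_zero, zero_smul, add_zero, mul_one, one_smul, dotProduct_single, Pi.neg_apply]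
  simp only [mul_add, add_mul, vecMulVec_mul_vecMulVec, mul_neg, neg_mul, one_mul, mul_one,
    single_dotProduct, dotProduct_single, Pi.single_eq_same, hx, hr, h, zero_smul, smul_zero,
     one_smul, vecMulVec_smul, vecMulVec_zero, smul_neg]
  simp
  abel

/-- Suslin's lemma: `1 + x rᵀ` is elementary if `r·x = 0` and `r` has a zero entry. -/
lemma El.key (l : ι) (x r : ι → R) (hr : r l = 0) (h : r ⬝ᵥ x = 0) :
    1 + vecMulVec x r ∈ El ι R := by
  have h1 : r ⬝ᵥ (x - Pi.single l (x l)) = 0 := by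
    rw [dotProduct_sub, h, dotProduct_single, hr]; simp
  have e1 := El.row l (x l • r) (by simp [hr])
  have e2 := El.key0 l (x - Pi.single l (x l)) r (by simp) hr h1
  convert mul_mem e1 e2 using 1
  rw [one_add_vecMulVec_mul, smul_dotProduct, h1]
  have : vecMulVec (Pi.single l (x l)) r = vecMulVec (Pi.single l 1) (x l • r) := by
    ext i j
    by_cases hi : i = l
    · subst hi; simp [vecMulVec_apply]
    · simp [vecMulVec_apply, hi]
  rw [sub_vecMulVec, this]
  simp
end basics
end part1

section part2
open Matrix Polynomial
/-- Substitution `X ↦ r X`. -/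
noncomputable def scl {R : Type*} [CommRing R] (r : R) : R[X] →+* R[X] :=
  Polynomial.eval₂RingHom C (C r * X)

section dilation
variable {ι R R' : Type*} [Fintype ι] [DecidableEq ι] [CommRing R] [CommRing R']

@[simp] lemma scl_C (r a : R) : scl r (C a) = C a := by simp [scl]
@[simp] lemma scl_X (r : R) : scl r X = C r * X := by simp [scl]

/-- Data saying that every element of `R'` is a fraction over `R` with denominator in `S`. -/
structure FracData (φ : R →+* R') (S : Submonoid R) : Prop where
  inj : Function.Injective φ
  clear : ∀ r' : R', ∃ s ∈ S, ∃ r : R, φ r = φ s * r'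

lemma FracData.fam {φ : R →+* R'} {S : Submonoid R} (h : FracData φ S) (v : ι → R') :
    ∃ s ∈ S, ∃ w : ι → R, ∀ i, φ (w i) = φ s * v i := by
  choose s hs r hr using h.clear
  refine ⟨∏ i, s (v i), Submonoid.prod_mem _ (fun i _ => hs _),
    fun i => (∏ j ∈ Finset.univ.erase i, s (v j)) * r (v i), fun i => ?_⟩
  rw [map_mul, hr, ← Finset.prod_erase_mul Finset.univ _ (Finset.mem_univ i), map_mul, mul_assoc]

lemma FracData.poly {φ : R →+* R'} {S : Submonoid R} (h : FracData φ S) (p : R'[X]) :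
    ∃ s ∈ S, ∃ q : R[X], q.map φ = C (φ s) * p := by
  induction p using Polynomial.induction_on' with
  | add p q hp hq =>
    obtain ⟨s, hs, a, ha⟩ := hp
    obtain ⟨t, ht, b, hb⟩ := hq
    refine ⟨s * t, mul_mem hs ht, C t * a + C s * b, ?_⟩
    simp only [Polynomial.map_add, Polynomial.map_mul, map_C, ha, hb, map_mul]
    ring
  | monomial n a =>
    obtain ⟨s, hs, r, hr⟩ := h.clear a
    refine ⟨s, hs, monomial n r, ?_⟩
    rw [Polynomial.map_monomial, hr, C_mul_monomial]

/-- dilatable matrices -/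
def Dil (φ : R →+* R') (S : Submonoid R) (θ : Matrix ι ι R'[X]) : Prop :=
  ∃ s ∈ S, ∀ t ∈ S, ∃ Θ ∈ El ι R[X], Θ.map (mapRingHom φ) = θ.map (scl (φ (s * t)))

lemma Dil.one (φ : R →+* R') (S : Submonoid R) : Dil φ S (1 : Matrix ι ι R'[X]) :=
  ⟨1, one_mem _, fun t ht => ⟨1, one_mem _, by
    rw [Matrix.map_one _ (map_zero _) (map_one _), Matrix.map_one _ (map_zero _) (map_one _)]⟩⟩

lemma Dil.mul {φ : R →+* R'} {S : Submonoid R} {x y : Matrix ι ι R'[X]}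
    (hx : Dil φ S x) (hy : Dil φ S y) : Dil φ S (x * y) := by
  obtain ⟨s, hs, h1⟩ := hx
  obtain ⟨s', hs', h2⟩ := hy
  refine ⟨s * s', mul_mem hs hs', fun t ht => ?_⟩
  obtain ⟨a, ha, ha'⟩ := h1 (s' * t) (mul_mem hs' ht)
  obtain ⟨b, hb, hb'⟩ := h2 (s * t) (mul_mem hs ht)
  refine ⟨a * b, mul_mem ha hb, ?_⟩
  rw [Matrix.map_mul, Matrix.map_mul, ha', hb', ← mul_assoc, ← mul_assoc, mul_comm s' s]

lemma comm_scl (φ : R →+* R') (r : R) (p : R[X]) :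
    (scl r p).map φ = scl (φ r) (p.map φ) := by
  have : (mapRingHom φ).comp (scl r) = (scl (φ r)).comp (mapRingHom φ) := by
    apply Polynomial.ringHom_ext <;> simp
  exact congrArg (fun f => f p) this

lemma Dil.basic {φ : R →+* R'} {S : Submonoid R} (h : FracData φ S) (l : ι) (v r : ι → R')
    (hr : r l = 0) (hv : r ⬝ᵥ v = 0) (b : R'[X]) :
    Dil φ S (1 + vecMulVec (fun i => X * b * C (v i)) (fun i => C (r i))) := by
  obtain ⟨s1, hs1, q, hq⟩ := h.poly b
  obtain ⟨s2, hs2, v', hv'⟩ := h.fam v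
  obtain ⟨s3, hs3, r', hr'⟩ := h.fam r
  refine ⟨s1 * s2 * s3, mul_mem (mul_mem hs1 hs2) hs3, fun t ht => ?_⟩
  have hr0 : r' l = 0 := h.inj (by rw [hr', hr, mul_zero, map_zero])
  have hv0 : r' ⬝ᵥ v' = 0 := h.inj (by
    rw [map_zero, dotProduct, map_sum]
    have : ∀ i, φ (r' i * v' i) = φ s3 * φ s2 * (r i * v i) := fun i => by
      rw [map_mul, hr', hv']; ring
    simp only [this, ← Finset.mul_sum]
    rw [show ∑ i, r i * v i = 0 from hv, mul_zero])
  refine ⟨1 + vecMulVec (fun i => (C t * X * scl (s1 * s2 * s3 * t) q) * C (v' i)) (fun i => C (r' i)),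
    El.key l _ _ (by simp [hr0]) ?_, ?_⟩
  · rw [dotProduct]
    have : ∀ i, C (r' i) * ((C t * X * scl (s1 * s2 * s3 * t) q) * C (v' i)) =
      (C t * X * scl (s1 * s2 * s3 * t) q) * C (r' i * v' i) := fun i => by rw [C_mul]; ring
    simp only [this, ← Finset.mul_sum]
    rw [← map_sum, show ∑ i, r' i * v' i = 0 from hv0]; simp
  · ext1 i j
    have e : scl (φ (s1 * s2 * s3 * t)) (q.map φ) = C (φ s1) * scl (φ (s1 * s2 * s3 * t)) b := by
      rw [hq]; simp
    simp only [Matrix.map_apply, Matrix.add_apply, vecMulVec_apply, map_add, map_mul,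
      coe_mapRingHom, comm_scl, scl_C, scl_X, map_C, map_X, hv', hr', e, Matrix.one_apply, apply_ite,
      map_one, map_zero, Polynomial.map_mul, Polynomial.map_add]
    congr 1
    · split_ifs <;> simp
    · simp only [← map_mul] at e ⊢
      rw [e]
      simp only [map_mul]
      ring

lemma Dil.conj {φ : R →+* R'} {S : Submonoid R} (h : FracData φ S)
    (h3 : ∀ j k : ι, ∃ l, l ≠ j ∧ l ≠ k) (ρ ρ' : Matrix ι ι R') (h1 : ρ' * ρ = 1) (i j : ι) (hij : i ≠ j)
    (b : R'[X]) :
    Dil φ S (ρ.map C * Matrix.transvection i j (X * b) * ρ'.map C) := by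
  have h2 : ρ * ρ' = 1 := mul_eq_one_comm.mp h1
  set v : ι → R' := fun a => ρ a i with hv
  set w : ι → R' := fun a => ρ' j a with hw
  set u : ι → R' := fun a => ρ' i a with hu
  have huv : ∑ a, u a * v a = 1 := by
    have := congrFun (congrFun h1 i) i
    simpa [Matrix.mul_apply] using this
  have hwv : ∑ a, w a * v a = 0 := by
    have := congrFun (congrFun h1 j) i
    simpa [Matrix.mul_apply, hij.symm] using this
  have e : ρ.map C * Matrix.transvection i j (X * b) * ρ'.map C =
      1 + vecMulVec (fun a => X * b * C (v a)) (fun a => C (w a)) := by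
    rw [Matrix.transvection, mul_add, add_mul, mul_one, ← Matrix.map_mul, h2]
    congr 1
    · exact Matrix.map_one _ (map_zero _) (map_one _)
    · ext1 p q
      rw [Matrix.mul_apply, Finset.sum_eq_single j]
      · simp [hv, hw, vecMulVec_apply]; ring
      · intro c _ hc
        rw [Matrix.mul_single_apply_of_ne _ _ _ _ _ hc, zero_mul]
      · simp
  rw [e]
  let r : ι × ι → ι → R' := fun p => (w p.1 * u p.2) • (Pi.single p.1 (v p.2) - Pi.single p.2 (v p.1))
  have hrv : ∀ p, r p ⬝ᵥ v = 0 := fun p => by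
    simp [r, smul_dotProduct, sub_dotProduct]
    ring
  have hsum : w = ∑ p, r p := by
    ext a
    rw [Finset.sum_apply, Fintype.sum_prod_type]
    have : ∀ x y, r (x, y) a = (if a = x then w x * (u y * v y) else 0) -
        (if a = y then (w x * v x) * u y else 0) := fun x y => by
      simp only [r, Pi.smul_apply, Pi.sub_apply, Pi.single_apply, smul_eq_mul]
      split_ifs <;> ring
    simp only [this, Finset.sum_sub_distrib, Finset.sum_ite_eq, Finset.mem_univ, if_true]
    rw [← Finset.sum_mul, hwv, Finset.sum_comm]
    simp [← Finset.mul_sum, huv]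
  have key : ∀ s : Finset (ι × ι), Dil φ S (1 + vecMulVec (fun a => X * b * C (v a))
      (fun a => C ((∑ p ∈ s, r p) a))) := by
    intro s
    induction s using Finset.induction_on with
    | empty =>
      convert Dil.one (ι := ι) φ S using 1
      ext1 p q
      simp [vecMulVec_apply]
    | insert p s hp ih =>
      obtain ⟨l, hl1, hl2⟩ := h3 p.1 p.2
      have hb := Dil.basic h l v (r p) (by simp [r, hl1, hl2]) (hrv p) b
      convert hb.mul ih using 1
      rw [one_add_vecMulVec_mul, Finset.sum_insert hp]
      have z : (fun i => C (r p i)) ⬝ᵥ (fun a => X * b * C (v a)) = 0 := by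
        rw [dotProduct]
        have : ∀ i, C (r p i) * (X * b * C (v i)) = X * b * C (r p i * v i) :=
          fun i => by rw [C_mul]; ring
        simp only [this, ← Finset.mul_sum, ← map_sum]
        rw [show ∑ i, r p i * v i = 0 from hrv p]; simp
      rw [z, zero_smul, add_zero]
      ext1 p q
      simp only [Matrix.add_apply, vecMulVec_apply, Pi.add_apply, map_add]
      ring
  rw [hsum]
  exact key _

lemma Dil.main {φ : R →+* R'} {S : Submonoid R} (h : FracData φ S)
    (h3 : ∀ j k : ι, ∃ l, l ≠ j ∧ l ≠ k) {θ : Matrix ι ι R'[X]} (hθ : θ ∈ El ι R'[X]) :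
    ∀ ρ μ : Matrix ι ι R', ρ ∈ El ι R' → ρ * θ.map (evalRingHom 0) * μ = 1 →
      Dil φ S (ρ.map C * θ * μ.map C) := by
  induction hθ using Submonoid.closure_induction with
  | mem x hx =>
    obtain ⟨i, j, a, hij, rfl⟩ := hx
    intro ρ μ hρ hμ
    obtain ⟨ρ', hρ', h1, h2⟩ := El.exists_inv hρ
    have ha : a = X * a.divX + C (a.coeff 0) := (Polynomial.X_mul_divX_add a).symm
    have e0 : (Matrix.transvection i j a).map (evalRingHom 0) = Matrix.transvection i j (a.coeff 0) := by
      rw [tv_map, coe_evalRingHom, coeff_zero_eq_eval_zero]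
    have e1 : (Matrix.transvection i j (a.coeff 0)).map C = Matrix.transvection i j (C (a.coeff 0)) :=
      tv_map _ _ _ _
    rw [e0, mul_assoc] at hμ
    have hμ' : Matrix.transvection i j (a.coeff 0) * μ = ρ' := by
      have := congrArg (ρ' * ·) hμ
      simpa [← mul_assoc, h1] using this
    have := Dil.conj h h3 ρ ρ' h1 i j hij a.divX
    rw [← hμ', Matrix.map_mul, e1, ← mul_assoc, mul_assoc (ρ.map C),
      Matrix.transvection_mul_transvection_same _ _ hij, ← ha] at this
    exact this
  | one =>
    intro ρ μ hρ hμ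
    rw [Matrix.map_one _ (map_zero _) (map_one _), mul_one] at hμ
    rw [mul_one, ← Matrix.map_mul, hμ, Matrix.map_one _ (map_zero _) (map_one _)]
    exact Dil.one _ _
  | mul x y hx' hy' hx hy =>
    intro ρ μ hρ hμ
    have hρ2 : ρ * x.map (evalRingHom 0) ∈ El ι R' := mul_mem hρ (El.map _ hx')
    obtain ⟨ν, hν, h1, h2⟩ := El.exists_inv hρ2
    have a1 := hx ρ ν hρ h2
    have a2 := hy (ρ * x.map (evalRingHom 0)) μ hρ2 (by rw [← hμ, Matrix.map_mul]; simp only [mul_assoc])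
    convert a1.mul a2 using 1
    have : ν.map C * (ρ * x.map (evalRingHom 0)).map C = 1 := by
      rw [← Matrix.map_mul, h1, Matrix.map_one _ (map_zero _) (map_one _)]
    calc _ = ρ.map C * x * 1 * (y * μ.map C) := by simp only [mul_assoc, mul_one]
      _ = _ := by rw [← this]; simp only [mul_assoc]

lemma dilation {φ : R →+* R'} {S : Submonoid R} (h : FracData φ S)
    (h3 : ∀ j k : ι, ∃ l, l ≠ j ∧ l ≠ k) {θ : Matrix ι ι R'[X]} (hθ : θ ∈ El ι R'[X])
    (h0 : θ.map (evalRingHom 0) = 1) :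
    ∃ s ∈ S, ∃ Θ ∈ El ι R[X], Θ.map (mapRingHom φ) = θ.map (scl (φ s)) := by
  have := Dil.main h h3 hθ 1 1 (one_mem _) (by rw [h0]; simp)
  rw [Matrix.map_one _ (map_zero _) (map_one _), one_mul, mul_one] at this
  obtain ⟨s, hs, hh⟩ := this
  have := hh 1 (one_mem _)
  rw [mul_one] at this
  exact ⟨s, hs, this⟩
end dilation
end part2

section part3
open Matrix Polynomial
universe uA

section LG
variable {ι κ : Type*} [Fintype ι] [DecidableEq ι]

/-- Substitution `X ↦ X + s Y`. -/
noncomputable def shf {A : Type*} [CommRing A] (s : A) : A[X] →+* A[X][X] :=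
  Polynomial.eval₂RingHom (C.comp C) (C X + C (C s) * X)

lemma FracData.atPrime {A B : Type*} [CommRing A] [CommRing B] [Algebra A B] [IsDomain A]
    (m : Ideal A) [m.IsPrime] [IsLocalization.AtPrime B m] :
    FracData (algebraMap A B) m.primeCompl where
  inj := IsLocalization.injective B m.primeCompl_le_nonZeroDivisors
  clear := fun r => by
    obtain ⟨⟨a, s⟩, h⟩ := IsLocalization.surj m.primeCompl r
    exact ⟨s, s.2, a, by rw [← h, mul_comm]⟩

lemma FracData.toPoly {R R' : Type*} [CommRing R] [CommRing R'] {φ : R →+* R'} {S : Submonoid R}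
    (h : FracData φ S) : FracData (mapRingHom φ) (S.map (C : R →+* R[X])) where
  inj := Polynomial.map_injective φ h.inj
  clear := fun p => by
    obtain ⟨s, hs, q, hq⟩ := h.poly p
    exact ⟨C s, ⟨s, hs, rfl⟩, q, by simpa using hq⟩

/-- The Quillen ideal. -/
def quillen {A : Type uA} [CommRing A] (M : Matrix ι κ A[X]) : Ideal A where
  carrier := {s | ∀ (B : Type uA) [CommRing B] [Algebra A B] (u w : B), ∃ ε ∈ El ι B,
    ε * M.map (aeval u) = M.map (aeval (u + algebraMap A B s * w))}
  add_mem' := by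
    intro s t hs ht B _ _ u w
    obtain ⟨e1, he1, h1⟩ := hs B u w
    obtain ⟨e2, he2, h2⟩ := ht B (u + algebraMap A B s * w) w
    refine ⟨e2 * e1, mul_mem he2 he1, ?_⟩
    rw [Matrix.mul_assoc, h1, h2, map_add, add_mul, add_assoc]
  zero_mem' := by
    intro B _ _ u w
    exact ⟨1, one_mem _, by simp⟩
  smul_mem' := by
    intro c s hs B _ _ u w
    obtain ⟨e1, he1, h1⟩ := hs B u (algebraMap A B c * w)
    refine ⟨e1, he1, ?_⟩
    rw [h1, smul_eq_mul, map_mul, mul_assoc, mul_left_comm (algebraMap A B c)]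

lemma mem_quillen_of {A : Type uA} [CommRing A] (M : Matrix ι κ A[X]) (s : A)
    (h : ∃ ε ∈ El ι A[X][X], ε * M.map C = M.map (shf s)) : s ∈ quillen M := by
  intro B _ _ u w
  obtain ⟨ε, hε, h⟩ := h
  let f : A[X][X] →+* B := eval₂RingHom (aeval u : A[X] →ₐ[A] B).toRingHom w
  refine ⟨ε.map f, El.map f hε, ?_⟩
  have := congrArg (fun N : Matrix ι κ A[X][X] => N.map f) h
  simp only [Matrix.map_mul, Matrix.map_map] at this
  have e1 : (f ∘ C : A[X] → B) = aeval u := by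
    ext p; simp [f]
  have e2 : (f ∘ shf s : A[X] → B) = aeval (u + algebraMap A B s * w) := by
    have : f.comp (shf s) = (aeval (u + algebraMap A B s * w) : A[X] →ₐ[A] B).toRingHom := by
      apply Polynomial.ringHom_ext <;> simp [f, shf]
    ext p
    exact congrArg (fun g => g p) this
  rw [e1, e2] at this
  exact this

theorem local_global {A : Type uA} [CommRing A] [IsDomain A]
    (h3 : ∀ j k : ι, ∃ l, l ≠ j ∧ l ≠ k) (M : Matrix ι κ A[X])
    (hloc : ∀ (m : Ideal A) [m.IsMaximal], ∃ ε ∈ El ι (Localization.AtPrime m)[X],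
      ε * M.map (mapRingHom (algebraMap A (Localization.AtPrime m))) =
        M.map ((mapRingHom (algebraMap A (Localization.AtPrime m))).comp (C.comp (evalRingHom 0)))) :
    ∃ ε ∈ El ι A[X], ε * M = M.map (C.comp (evalRingHom 0)) := by
  have htop : quillen M = ⊤ := by
    by_contra hne
    obtain ⟨m, hm, hle⟩ := Ideal.exists_le_maximal _ hne
    obtain ⟨σ, hσ, hσM⟩ := hloc m
    set B := Localization.AtPrime m
    set α := algebraMap A B
    have FD : FracData α m.primeCompl := FracData.atPrime m
    -- σ(X+Y)
    have hσ1 := El.map (shf (1 : B)) hσ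
    obtain ⟨τ, hτ, t1, t2⟩ := El.exists_inv hσ1
    have hθ : τ * σ.map C ∈ El ι B[X][X] := mul_mem hτ (El.map C hσ)
    have hc1 : (evalRingHom (0 : B[X])).comp (shf (1 : B)) = RingHom.id _ := by
      apply Polynomial.ringHom_ext <;> simp [shf]
    have hc2 : (evalRingHom (0 : B[X])).comp C = RingHom.id _ := by
      ext <;> simp
    have h0 : (τ * σ.map C).map (evalRingHom 0) = 1 := by
      have e1 : (σ.map C).map (evalRingHom (0 : B[X])) = (σ.map (shf (1 : B))).map (evalRingHom 0) := by
        rw [Matrix.map_map, Matrix.map_map, ← RingHom.coe_comp, ← RingHom.coe_comp, hc1, hc2]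
      rw [Matrix.map_mul, e1, ← Matrix.map_mul, t1, Matrix.map_one _ (map_zero _) (map_one _)]
    obtain ⟨c, ⟨s, hs, rfl⟩, Θ, hΘ, hΘ'⟩ := dilation FD.toPoly h3 hθ h0
    refine hs (hle (mem_quillen_of M s ⟨Θ, hΘ, ?_⟩))
    -- θ M(X) = M(X+Y)
    have E : (τ * σ.map C) * (M.map (mapRingHom α)).map C = (M.map (mapRingHom α)).map (shf (1 : B)) := by
      have a1 := congrArg (fun N : Matrix ι κ B[X] => N.map C) hσM
      have a2 := congrArg (fun N : Matrix ι κ B[X] => N.map (shf (1 : B))) hσM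
      simp only [Matrix.map_mul] at a1 a2
      have a3 : (M.map ((mapRingHom α).comp (C.comp (evalRingHom 0)))).map (C : B[X] →+* B[X][X]) =
          (M.map ((mapRingHom α).comp (C.comp (evalRingHom 0)))).map (shf (1 : B)) := by
        rw [Matrix.map_map, Matrix.map_map]
        congr 1
        ext1 p
        simp [shf]
      rw [Matrix.mul_assoc, a1, a3, ← a2, ← Matrix.mul_assoc, t1, Matrix.one_mul]
    have E2 := congrArg (fun N : Matrix ι κ B[X][X] => N.map (scl (mapRingHom α (C s)))) E
    simp only [Matrix.map_mul (f := scl (mapRingHom α (C s)))] at E2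
    have E3 : (Θ * M.map C).map (mapRingHom (mapRingHom α)) = (M.map (shf s)).map (mapRingHom (mapRingHom α)) := by
      rw [Matrix.map_mul]
      erw [hΘ']
      rw [show ((M.map C).map (mapRingHom (mapRingHom α))) =
        ((M.map (mapRingHom α)).map C).map (scl (mapRingHom α (C s))) from ?_]
      · erw [← Matrix.map_mul, E]
        rw [Matrix.map_map, Matrix.map_map, Matrix.map_map]
        simp only [← RingHom.coe_comp]
        congr 2
        apply Polynomial.ringHom_ext <;> simp [shf]
      · rw [Matrix.map_map, Matrix.map_map, Matrix.map_map]
        congr 1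
        ext1 p
        simp
    exact Matrix.map_injective (Polynomial.map_injective _ (Polynomial.map_injective _ FD.inj)) E3
  have h1 : (1 : A) ∈ quillen M := by rw [htop]; trivial
  obtain ⟨ε, hε, h⟩ := h1 A[X] X (-X)
  refine ⟨ε, hε, ?_⟩
  have e1 : M.map (aeval (X : A[X])) = M := by ext1; simp
  rw [e1] at h
  rw [h]
  ext1 i j
  simp [aeval_def, eval₂_at_zero, coeff_zero_eq_eval_zero]
end LG
end part3

section part4
open Matrix Polynomial
section orb
variable {ι : Type*} [Fintype ι] [DecidableEq ι] {R S : Type*} [CommRing R] [CommRing S]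

/-- Two columns in the same orbit under elementary matrices. -/
def Orb (v w : ι → R) : Prop := ∃ ε ∈ El ι R, ε *ᵥ v = w

/-- Unimodular columns. -/
def Uni (v : ι → R) : Prop := ∃ u : ι → R, u ⬝ᵥ v = 1

lemma Orb.trans {u v w : ι → R} (h : Orb u v) (h' : Orb v w) : Orb u w := by
  obtain ⟨a, ha, rfl⟩ := h
  obtain ⟨b, hb, rfl⟩ := h'
  exact ⟨b * a, mul_mem hb ha, by simp⟩

lemma Orb.symm {u v : ι → R} (h : Orb u v) : Orb v u := by
  obtain ⟨a, ha, rfl⟩ := h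
  obtain ⟨b, hb, h1, h2⟩ := El.exists_inv ha
  exact ⟨b, hb, by simp [h1]⟩

lemma Orb.refl (u : ι → R) : Orb u u := ⟨1, one_mem _, by simp⟩

lemma Orb.map (f : R →+* S) {u v : ι → R} (h : Orb u v) : Orb (f ∘ u) (f ∘ v) := by
  obtain ⟨a, ha, rfl⟩ := h
  refine ⟨a.map f, El.map f ha, ?_⟩
  ext i
  exact (RingHom.map_mulVec f a u i).symm

lemma Uni.orb {u v : ι → R} (h : Orb u v) (hu : Uni u) : Uni v := by
  obtain ⟨a, ha, rfl⟩ := h.symm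
  obtain ⟨x, hx⟩ := hu
  exact ⟨x ᵥ* a, by rw [← hx, dotProduct_mulVec]⟩

lemma Orb.add (v : ι → R) (l : ι) (c : ι → R) (hc : c l = 0) :
    Orb v (fun i => v i + c i * v l) := by
  refine ⟨_, El.col l c hc, ?_⟩
  ext i
  simp [add_mulVec, vecMulVec_mulVec, mul_comm]

lemma Orb.row (v : ι → R) (l : ι) (c : ι → R) (hc : c l = 0) :
    Orb v (v + Pi.single l (c ⬝ᵥ v)) := by
  refine ⟨_, El.row l c hc, ?_⟩
  ext i
  by_cases h : i = l
  · subst h; simp [add_mulVec, vecMulVec_mulVec, mul_comm]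
  · simp [add_mulVec, vecMulVec_mulVec, mul_comm, h]

lemma Orb.single_single (i j : ι) : Orb (Pi.single i (1 : R)) (Pi.single j 1) := by
  by_cases h : i = j
  · subst h; exact Orb.refl _
  · have h1 := Orb.add (Pi.single i (1 : R)) i (Pi.single j 1) (by simp [h])
    refine h1.trans ?_
    have h2 := Orb.add (fun k => (Pi.single i (1 : R) : ι → R) k + (Pi.single j (1 : R) : ι → R) k * (Pi.single i (1 : R) : ι → R) i) j (Pi.single i (-1)) (by simp [Ne.symm h])
    convert h2 using 1
    ext k
    by_cases hk : k = i
    · subst hk; simp [h, Ne.symm h]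
    · simp [hk, h, Ne.symm h]

lemma Orb.of_one {v : ι → R} {i : ι} (h : v i = 1) : Orb v (Pi.single i 1) := by
  convert Orb.add v i (fun k => if k = i then 0 else - v k) (by simp) using 1
  ext k
  by_cases hk : k = i
  · subst hk; simp [h]
  · simp [hk, h]

lemma Orb.of_unit {v : ι → R} {i j : ι} (hij : i ≠ j) (h : IsUnit (v i)) : Orb v (Pi.single i 1) := by
  obtain ⟨u, hu⟩ := h
  have h1 := Orb.add v i (Pi.single j (↑u⁻¹ * (1 - v j))) (by simp [hij])
  refine (h1.trans (Orb.of_one (i := j) ?_)).trans (Orb.single_single _ _)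
  simp only [Pi.single_eq_same, ← hu]
  rw [mul_right_comm, Units.inv_mul]; ring

end orb

lemma suslin_coeff {A : Type*} [CommRing A] {f : A[X]} {d : ℕ} (hf : f.Monic)
    (hd : f.natDegree = d + 1) : ∀ (k i : ℕ) (g : A[X]), i + k = d → g.natDegree ≤ d →
    ∃ p q : A[X], (p * f + q * g).natDegree ≤ d ∧ (p * f + q * g).coeff d = g.coeff i := by
  intro k
  induction k with
  | zero =>
    intro i g hi hg
    exact ⟨0, 1, by simpa using hg, by simp at hi; simp [hi]⟩
  | succ k ih =>
    intro i g hi hg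
    have hfc : f.coeff (d + 1) = 1 := by rw [← hd]; exact hf
    have hg' : (X * g - C (g.coeff d) * f).natDegree ≤ d := by
      rw [natDegree_le_iff_coeff_eq_zero]
      intro N hN
      obtain ⟨N, rfl⟩ : ∃ N', N = N' + 1 := ⟨N - 1, by omega⟩
      rw [coeff_sub, coeff_X_mul, coeff_C_mul]
      rcases Nat.lt_or_ge d N with h | h
      · rw [coeff_eq_zero_of_natDegree_lt (lt_of_le_of_lt hg h),
          coeff_eq_zero_of_natDegree_lt (p := f) (by omega)]; simp
      · have : N = d := by omega
        subst this
        rw [hfc]; simp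
    obtain ⟨p, q, h1, h2⟩ := ih (i + 1) _ (by omega) hg'
    refine ⟨p - q * C (g.coeff d), q * X + C (f.coeff (i + 1)), ?_, ?_⟩
    · have : (p - q * C (g.coeff d)) * f + (q * X + C (f.coeff (i + 1))) * g =
        (p * f + q * (X * g - C (g.coeff d) * f)) + C (f.coeff (i + 1)) * g := by ring
      rw [this]
      exact natDegree_add_le_of_degree_le h1 ((natDegree_C_mul_le _ _).trans hg)
    · have : (p - q * C (g.coeff d)) * f + (q * X + C (f.coeff (i + 1))) * g =
        (p * f + q * (X * g - C (g.coeff d) * f)) + C (f.coeff (i + 1)) * g := by ring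
      rw [this, coeff_add, h2, coeff_sub, coeff_X_mul, coeff_C_mul, coeff_C_mul]
      ring

section horrocks
variable {ι : Type*} [Fintype ι] [DecidableEq ι]

theorem horrocks_local {A : Type*} [CommRing A] [IsLocalRing A]
    (h3 : ∀ j k : ι, ∃ l, l ≠ j ∧ l ≠ k) : ∀ (d : ℕ) (i : ι) (v : ι → A[X]), (v i).Monic →
    (v i).natDegree = d → Uni v → Orb v (Pi.single i 1) := by
  intro d
  induction d with
  | zero =>
    intro i v hm hd hu
    exact Orb.of_one (hm.natDegree_eq_zero.mp hd)
  | succ d ih =>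
    intro i v hm hd hu
    have h1 := Orb.add v i (fun k => if k = i then 0 else - (v k /ₘ v i)) (by simp)
    set w : ι → A[X] := fun k => v k + (if k = i then 0 else - (v k /ₘ v i)) * v i with hw
    have hwi : w i = v i := by simp [hw]
    have hwk : ∀ k, k ≠ i → (w k).natDegree ≤ d := by
      intro k hk
      have : w k = v k %ₘ v i := by
        rw [modByMonic_eq_sub_mul_div]; simp [hw, hk]; ring
      rw [this]
      have := natDegree_modByMonic_lt (v k) hm (by intro h; rw [h] at hd; simp at hd)
      omega
    have huw : Uni w := hu.orb h1
    -- some unit coefficient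
    obtain ⟨j, hji, n, hn⟩ : ∃ j, j ≠ i ∧ ∃ n, IsUnit ((w j).coeff n) := by
      by_contra hcon
      push Not at hcon
      obtain ⟨u, hu⟩ := huw
      have := congrArg (Polynomial.map (IsLocalRing.residue A)) hu
      rw [dotProduct, Polynomial.map_sum, Finset.sum_eq_single i] at this
      · rw [Polynomial.map_mul, Polynomial.map_one] at this
        have h2 : IsUnit ((w i).map (IsLocalRing.residue A)) := IsUnit.of_mul_eq_one_right _ this
        rw [hwi] at h2
        have h3 := natDegree_eq_zero_of_isUnit h2
        rw [hm.natDegree_map, hd] at h3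
        omega
      · intro k _ hk
        have : (w k).map (IsLocalRing.residue A) = 0 := by
          ext n
          rw [coeff_map, coeff_zero, IsLocalRing.residue_eq_zero_iff, IsLocalRing.mem_maximalIdeal]
          exact hcon k hk n
        rw [Polynomial.map_mul, this, mul_zero]
      · simp
    have hnd : n ≤ d := by
      by_contra hlt
      rw [coeff_eq_zero_of_natDegree_lt (lt_of_le_of_lt (hwk j hji) (by omega))] at hn
      exact not_isUnit_zero hn
    obtain ⟨p, q, hp, hq⟩ := suslin_coeff (f := w i) (d := d) (by rw [hwi]; exact hm) (by rw [hwi, hd])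
      (d - n) n (w j) (by omega) (hwk j hji)
    obtain ⟨a, ha⟩ := hn
    obtain ⟨l, hli, hlj⟩ := h3 i j
    -- add a multiple of the monic combination to entry l
    set c : A[X] := C ((1 - (w l).coeff d) * ↑a⁻¹) with hc
    have h2 := Orb.row w l (Pi.single i (c * p) + Pi.single j (c * q)) (by simp [hli, hlj])
    set z := w + Pi.single l ((Pi.single i (c * p) + Pi.single j (c * q)) ⬝ᵥ w) with hz
    have hzl : z l = w l + c * (p * w i + q * w j) := by
      simp [hz, add_dotProduct]; ring
    have hdeg : (z l).natDegree ≤ d := by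
      rw [hzl]
      exact natDegree_add_le_of_degree_le (hwk l hli) ((natDegree_C_mul_le _ _).trans hp)
    have hco : (z l).coeff d = 1 := by
      rw [hzl, coeff_add, coeff_C_mul, hq, ← ha, mul_assoc, Units.inv_mul]; ring
    have hzm : (z l).Monic := monic_of_natDegree_le_of_coeff_eq_one d hdeg hco
    have hzd : (z l).natDegree = d := by
      refine le_antisymm hdeg (le_natDegree_of_ne_zero ?_)
      rw [hco]; exact one_ne_zero
    exact ((h1.trans h2).trans (ih l z hzm hzd (huw.orb h2))).trans (Orb.single_single _ _)

theorem horrocks_global {A : Type*} [CommRing A] [IsDomain A]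
    (h3 : ∀ j k : ι, ∃ l, l ≠ j ∧ l ≠ k) (i : ι) (v : ι → A[X]) (hm : (v i).Monic)
    (h0 : IsUnit ((v i).coeff 0)) (hu : Uni v) : Orb v (Pi.single i 1) := by
  obtain ⟨ε, hε, h⟩ := local_global h3 (Matrix.of (fun i (_ : Unit) => v i)) (by
    intro m hmm
    set B := Localization.AtPrime m
    set f := mapRingHom (algebraMap A B) with hf
    have h1 : Orb (f ∘ v) (Pi.single i 1) := by
      apply horrocks_local h3 _ i (f ∘ v) (hm.map _) rfl
      obtain ⟨u, hu⟩ := hu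
      refine ⟨f ∘ u, ?_⟩
      have := congrArg f hu
      simpa [dotProduct] using this
    have h2 := Orb.map ((C : B →+* B[X]).comp (evalRingHom 0)) h1
    have h4 : ((C : B →+* B[X]).comp (evalRingHom 0)) ∘ (Pi.single i (1 : B[X]) : ι → B[X]) = Pi.single i 1 := by
      ext1 k
      by_cases hk : k = i
      · subst hk; simp
      · simp [hk]
    rw [h4] at h2
    obtain ⟨ε, hε, he⟩ := h1.trans h2.symm
    refine ⟨ε, hε, ?_⟩
    ext1 k u
    have := congrFun he k
    simp only [mulVec, dotProduct, Function.comp] at this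
    simp only [Matrix.mul_apply, Matrix.map_apply, of_apply]
    rw [this]
    simp [hf, eval_map, eval₂_at_zero, coeff_zero_eq_eval_zero])
  have h5 : Orb v (fun k => C ((v k).coeff 0)) := by
    refine ⟨ε, hε, ?_⟩
    ext1 k
    have := congrFun (congrFun h k) ()
    simp only [Matrix.mul_apply, Matrix.map_apply, of_apply] at this
    simp only [mulVec, dotProduct]
    rw [this]
    simp [coeff_zero_eq_eval_zero]
  obtain ⟨j, hj, -⟩ := h3 i i
  exact h5.trans (Orb.of_unit hj.symm (h0.map C))
end horrocks
end part4

section part5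
open Matrix Polynomial
/-- `1 ⊕ (a b; c d)` -/
def D3 {R : Type*} [CommRing R] (a b c d : R) : Matrix (Fin 3) (Fin 3) R :=
  !![1, 0, 0; 0, a, b; 0, c, d]

lemma El.perm {ι R : Type*} [Fintype ι] [DecidableEq ι] [CommRing R] (σ : ι ≃ ι)
    {M : Matrix ι ι R} (h : M ∈ El ι R) : M.submatrix σ σ ∈ El ι R := by
  induction h using Submonoid.closure_induction with
  | mem x hx =>
    obtain ⟨i, j, c, hij, rfl⟩ := hx
    have : (Matrix.transvection i j c).submatrix σ σ = Matrix.transvection (σ.symm i) (σ.symm j) c := by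
      ext a b
      simp [Matrix.transvection, Matrix.one_apply, Matrix.single_apply, Equiv.symm_apply_eq]
    rw [this]
    exact El.tv (by simpa using hij) _
  | one => rw [Matrix.submatrix_one_equiv]; exact one_mem _
  | mul x y _ _ hx hy =>
    rw [← Matrix.submatrix_mul_equiv x y σ σ σ]; exact mul_mem hx hy

section D3
variable {R : Type*} [CommRing R]

lemma tv01 (t : R) : Matrix.transvection (0 : Fin 3) 1 t = !![1, t, 0; 0, 1, 0; 0, 0, 1] := by
  ext i j; fin_cases i <;> fin_cases j <;> simp [Matrix.transvection, Matrix.single_apply]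
lemma tv02 (t : R) : Matrix.transvection (0 : Fin 3) 2 t = !![1, 0, t; 0, 1, 0; 0, 0, 1] := by
  ext i j; fin_cases i <;> fin_cases j <;> simp [Matrix.transvection, Matrix.single_apply]
lemma tv12 (t : R) : Matrix.transvection (1 : Fin 3) 2 t = !![1, 0, 0; 0, 1, t; 0, 0, 1] := by
  ext i j; fin_cases i <;> fin_cases j <;> simp [Matrix.transvection, Matrix.single_apply]
lemma tv21 (t : R) : Matrix.transvection (2 : Fin 3) 1 t = !![1, 0, 0; 0, 1, 0; 0, t, 1] := by
  ext i j; fin_cases i <;> fin_cases j <;> simp [Matrix.transvection, Matrix.single_apply]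
lemma tv20 (t : R) : Matrix.transvection (2 : Fin 3) 0 t = !![1, 0, 0; 0, 1, 0; t, 0, 1] := by
  ext i j; fin_cases i <;> fin_cases j <;> simp [Matrix.transvection, Matrix.single_apply]

lemma D3.colA {a b c d : R} (t : R) (h : D3 (a + t * b) b (c + t * d) d ∈ El (Fin 3) R) :
    D3 a b c d ∈ El (Fin 3) R := by
  refine El.of_mul_right (El.tv (i := 2) (j := 1) (by decide) t) ?_
  convert h using 1
  rw [tv21]
  ext i j; fin_cases i <;> fin_cases j <;> simp [D3, Matrix.mul_apply, Fin.sum_univ_three] <;> ring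

lemma D3.colB {a b c d : R} (t : R) (h : D3 a (b + t * a) c (d + t * c) ∈ El (Fin 3) R) :
    D3 a b c d ∈ El (Fin 3) R := by
  refine El.of_mul_right (El.tv (i := 1) (j := 2) (by decide) t) ?_
  convert h using 1
  rw [tv12]
  ext i j; fin_cases i <;> fin_cases j <;> simp [D3, Matrix.mul_apply, Fin.sum_univ_three] <;> ring

lemma D3.rowA {a b c d : R} (t : R) (h : D3 (a + t * c) (b + t * d) c d ∈ El (Fin 3) R) :
    D3 a b c d ∈ El (Fin 3) R := by
  refine El.of_mul_left (El.tv (i := 1) (j := 2) (by decide) t) ?_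
  convert h using 1
  rw [tv12]
  ext i j; fin_cases i <;> fin_cases j <;> simp [D3, Matrix.mul_apply, Fin.sum_univ_three]

lemma D3.rowB {a b c d : R} (t : R) (h : D3 a b (c + t * a) (d + t * b) ∈ El (Fin 3) R) :
    D3 a b c d ∈ El (Fin 3) R := by
  refine El.of_mul_left (El.tv (i := 2) (j := 1) (by decide) t) ?_
  convert h using 1
  rw [tv21]
  ext i j; fin_cases i <;> fin_cases j <;> simp [D3, Matrix.mul_apply, Fin.sum_univ_three] <;> ring

lemma D3.one {b c d : R} (h : d - b * c = 1) : D3 1 b c d ∈ El (Fin 3) R := by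
  apply D3.colB (-b)
  apply D3.rowB (-c)
  have h1 : b + -b * 1 = 0 := by ring
  have h2 : c + -c * 1 = 0 := by ring
  have h3 : d + -b * c + -c * 0 = 1 := by linear_combination h
  rw [h1, h2, h3]
  convert one_mem (El (Fin 3) R) using 1
  ext i j; fin_cases i <;> fin_cases j <;> simp [D3]

lemma D3.unitB {a b c d : R} (hb : IsUnit b) (h : a * d - b * c = 1) : D3 a b c d ∈ El (Fin 3) R := by
  obtain ⟨u, rfl⟩ := hb
  apply D3.colA (↑u⁻¹ * (1 - a))
  have h1 : a + ↑u⁻¹ * (1 - a) * ↑u = 1 := by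
    rw [mul_right_comm, Units.inv_mul]; ring
  rw [h1]
  apply D3.one
  have h2 : (u : R) * ↑u⁻¹ = 1 := Units.mul_inv u
  linear_combination h - d * (1 - a) * h2

lemma D3.unitA {a b c d : R} (ha : IsUnit a) (h : a * d - b * c = 1) : D3 a b c d ∈ El (Fin 3) R := by
  obtain ⟨u, rfl⟩ := ha
  apply D3.colB (↑u⁻¹ * (1 - b))
  apply D3.unitB
  · have h1 : b + ↑u⁻¹ * (1 - b) * ↑u = 1 := by
      rw [mul_right_comm, Units.inv_mul]; ring
    rw [h1]; exact isUnit_one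
  · linear_combination h

lemma D3.mennicke {a a' b c c1 c2 d d1 d2 : R} (h1 : a * d1 - b * c1 = 1) (h2 : a' * d2 - b * c2 = 1)
    (h : a * a' * d - b * c = 1) (e1 : D3 a b c1 d1 ∈ El (Fin 3) R) (e2 : D3 a' b c2 d2 ∈ El (Fin 3) R) :
    D3 (a * a') b c d ∈ El (Fin 3) R := by
  have hN : !![d2, c2, 0; b, a', 0; 0, 0, 1] ∈ El (Fin 3) R := by
    convert El.perm (Equiv.swap 0 2) e2 using 1
    ext i j; fin_cases i <;> fin_cases j <;>
      simp [D3, Equiv.swap_apply_def]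
  have hW : !![0, 0, -1; 0, 1, 0; 1, 0, 0] ∈ El (Fin 3) R := by
    have := mul_mem (mul_mem (El.tv (R := R) (i := (0 : Fin 3)) (j := 2) (by decide) (-1))
      (El.tv (R := R) (i := (2 : Fin 3)) (j := 0) (by decide) 1))
      (El.tv (R := R) (i := (0 : Fin 3)) (j := 2) (by decide) (-1))
    convert this using 1
    rw [tv02, tv20]
    ext i j; fin_cases i <;> fin_cases j <;> simp [Matrix.mul_apply, Fin.sum_univ_three]
  have m1 : D3 a b c1 d1 * !![d2, c2, 0; b, a', 0; 0, 0, 1] * Matrix.transvection 2 0 (-a) =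
      !![d2, c2, 0; 0, a * a', b; -1, c1 * a', d1] := by
    rw [tv20]
    ext i j; fin_cases i <;> fin_cases j <;> simp [D3, Matrix.mul_apply, Fin.sum_univ_three]
    · ring
    · linear_combination -h1
  have i1 := mul_mem (mul_mem e1 hN) (El.tv (R := R) (i := (2 : Fin 3)) (j := 0) (by decide) (-a))
  rw [m1] at i1
  have m2 : Matrix.transvection 0 2 d2 * !![d2, c2, 0; 0, a * a', b; -1, c1 * a', d1] *
      (Matrix.transvection 0 1 (c1 * a') * Matrix.transvection 0 2 d1) =
      !![0, c2 + d2 * c1 * a', d2 * d1; 0, a * a', b; -1, 0, 0] := by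
    rw [tv02, tv01, tv02]
    ext i j; fin_cases i <;> fin_cases j <;> simp [D3, Matrix.mul_apply, Fin.sum_univ_three]
    ring
  have i2 := mul_mem (mul_mem (El.tv (R := R) (i := (0 : Fin 3)) (j := 2) (by decide) d2) i1)
    (mul_mem (El.tv (R := R) (i := (0 : Fin 3)) (j := 1) (by decide) (c1 * a'))
      (El.tv (R := R) (i := (0 : Fin 3)) (j := 2) (by decide) d1))
  rw [m2] at i2
  set C' := c2 + d2 * c1 * a' with hC
  set D' := d2 * d1 with hD
  have hCD : a * a' * D' - b * C' = 1 := by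
    rw [hC, hD]; linear_combination a' * d2 * h1 + h2
  have m3 : !![0, 0, -1; 0, 1, 0; 1, 0, 0] * !![0, C', D'; 0, a * a', b; -1, 0, 0] =
      D3 (a * a') b C' D' := by
    ext i j; fin_cases i <;> fin_cases j <;> simp [D3, Matrix.mul_apply, Fin.sum_univ_three]
  have i3 := mul_mem hW i2
  rw [m3] at i3
  apply D3.rowB (-(c * D' - d * C'))
  convert i3 using 2
  · linear_combination C' * h - c * hCD
  · linear_combination D' * h - d * hCD
end D3

lemma murthy_step {A : Type*} [CommRing A] [IsLocalRing A] (n : ℕ)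
    (ih : ∀ a b c d : A[X], a.Monic → a.natDegree = n → a * d - b * c = 1 → D3 a b c d ∈ El (Fin 3) A[X])
    (a b c d : A[X]) (ha : a.Monic) (hn : a.natDegree = n + 1) (h : a * d - b * c = 1)
    (hb : b.natDegree ≤ n) (hb0 : IsUnit (b.coeff 0)) : D3 a b c d ∈ El (Fin 3) A[X] := by
  obtain ⟨u, hu⟩ := hb0
  set t : A := - (a.coeff 0 * ↑u⁻¹) with ht
  apply D3.colA (C t)
  have hlt : (C t * b).degree < a.degree := by
    refine lt_of_le_of_lt degree_le_natDegree ?_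
    rw [degree_eq_natDegree ha.ne_zero, hn]
    exact_mod_cast Nat.lt_succ_of_le ((natDegree_C_mul_le _ _).trans hb)
  have hm : (a + C t * b).Monic := ha.add_of_left hlt
  have hnd : (a + C t * b).natDegree = n + 1 := by
    rw [natDegree_add_eq_left_of_degree_lt hlt, hn]
  have hdet : (a + C t * b) * d - b * (c + C t * d) = 1 := by linear_combination h
  have h0 : (a + C t * b).coeff 0 = 0 := by
    rw [coeff_add, coeff_C_mul, ← hu, ht, neg_mul, mul_assoc, Units.inv_mul]; ring
  generalize a + C t * b = a1 at *
  generalize c + C t * d = c1 at *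
  obtain ⟨a2, rfl⟩ := X_dvd_iff.mpr h0
  have hm2 : a2.Monic := by
    exact Monic.of_mul_monic_left monic_X hm
  have hn2 : a2.natDegree = n := by
    rw [natDegree_X_mul hm2.ne_zero] at hnd; omega
  have e2 := ih a2 b c1 (X * d) hm2 hn2 (by linear_combination hdet)
  have e1 : D3 X b c1 (a2 * d) ∈ El (Fin 3) A[X] := by
    apply D3.colB (- b.divX)
    apply D3.unitB
    · have : b + -b.divX * X = C (b.coeff 0) := by
        linear_combination - divX_mul_X_add b
      rw [this, ← hu]
      exact (Units.isUnit u).map C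
    · linear_combination hdet
  exact D3.mennicke (by linear_combination hdet) (by linear_combination hdet) hdet e1 e2

theorem murthy_local {A : Type*} [CommRing A] [IsLocalRing A] : ∀ (n : ℕ) (a b c d : A[X]),
    a.Monic → a.natDegree = n → a * d - b * c = 1 → D3 a b c d ∈ El (Fin 3) A[X] := by
  intro n
  induction n with
  | zero =>
    intro a b c d ha hn h
    rw [ha.natDegree_eq_zero.mp hn] at *
    exact D3.one (by linear_combination h)
  | succ n ih =>
    have red : ∀ (a b c d : A[X]), a.Monic → a.natDegree = n + 1 → a * d - b * c = 1 →
        b.natDegree ≤ n → c.natDegree ≤ n → D3 a b c d ∈ El (Fin 3) A[X] := by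
      intro a b c d ha hn h hb hc
      by_cases hb0 : IsUnit (b.coeff 0)
      · exact murthy_step n ih a b c d ha hn h hb hb0
      · have hd : d.natDegree ≤ n := by
          by_cases hd0 : d = 0
          · simp [hd0]
          · have e1 : (a * d).natDegree = a.natDegree + d.natDegree := ha.natDegree_mul' hd0
            have e2 : a * d = 1 + b * c := by linear_combination h
            have e3 : (1 + b * c).natDegree ≤ n + n :=
              natDegree_add_le_of_degree_le (by simp)
                (natDegree_mul_le.trans (add_le_add hb hc))
            rw [e2] at e1; omega
        have hd0 : IsUnit (d.coeff 0) := by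
          have e := congrArg (fun p => coeff p 0) h
          simp only [coeff_sub, mul_coeff_zero, coeff_one_zero] at e
          rcases IsLocalRing.isUnit_or_isUnit_of_add_one
            (show a.coeff 0 * d.coeff 0 + (- (b.coeff 0 * c.coeff 0)) = 1 by linear_combination e) with hh | hh
          · exact isUnit_of_mul_isUnit_right hh
          · exact absurd (isUnit_of_mul_isUnit_left (IsUnit.neg_iff _ |>.mp hh)) hb0
        apply D3.rowA 1
        rw [one_mul, one_mul]
        have hlt : c.degree < a.degree := by
          refine lt_of_le_of_lt degree_le_natDegree ?_
          rw [degree_eq_natDegree ha.ne_zero, hn]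
          exact_mod_cast Nat.lt_succ_of_le hc
        apply murthy_step n ih
        · exact ha.add_of_left hlt
        · rw [natDegree_add_eq_left_of_degree_lt hlt, hn]
        · linear_combination h
        · exact natDegree_add_le_of_degree_le hb hd
        · rw [coeff_add]
          by_contra hcon
          have := IsLocalRing.nonunits_add (a := b.coeff 0 + d.coeff 0) (b := - b.coeff 0) hcon
            (by rw [mem_nonunits_iff, IsUnit.neg_iff]; exact hb0)
          rw [show b.coeff 0 + d.coeff 0 + - b.coeff 0 = d.coeff 0 by ring] at this
          exact this hd0
    intro a b c d ha hn h
    have hmod : ∀ p : A[X], (p + -(p /ₘ a) * a).natDegree ≤ n := by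
      intro p
      have e : p + -(p /ₘ a) * a = p %ₘ a := by rw [modByMonic_eq_sub_mul_div]; ring
      have := natDegree_modByMonic_lt p ha (by intro h; rw [h] at hn; simp at hn)
      rw [e]; omega
    apply D3.colB (-(b /ₘ a))
    apply D3.rowB (-(c /ₘ a))
    exact red _ _ _ _ ha hn (by linear_combination h) (hmod b) (hmod c)

theorem D3.hmap {R S : Type*} [CommRing R] [CommRing S] (f : R →+* S) (a b c d : R) :
    (D3 a b c d).map f = D3 (f a) (f b) (f c) (f d) := by
  ext i j; fin_cases i <;> fin_cases j <;> simp [D3]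

theorem murthy_global {A : Type*} [CommRing A] [IsDomain A] (a b c d : A[X]) (ha : a.Monic)
    (h0 : IsUnit (a.coeff 0)) (h : a * d - b * c = 1) : D3 a b c d ∈ El (Fin 3) A[X] := by
  obtain ⟨ε, hε, he⟩ := local_global (ι := Fin 3) (by decide) (D3 a b c d) (by
    intro m _
    set B := Localization.AtPrime m
    set f := mapRingHom (algebraMap A B) with hf
    have h1 : D3 (f a) (f b) (f c) (f d) ∈ El (Fin 3) B[X] := by
      exact murthy_local _ (f a) (f b) (f c) (f d) (ha.map _) rfl
        (by rw [← map_mul, ← map_mul, ← map_sub, h, map_one])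
    obtain ⟨g, hg, hg1, hg2⟩ := El.exists_inv h1
    have h2 := El.map ((C : B →+* B[X]).comp (evalRingHom 0)) h1
    refine ⟨_, mul_mem h2 hg, ?_⟩
    rw [D3.hmap f, Matrix.mul_assoc, hg1, Matrix.mul_one, D3.hmap, D3.hmap]
    simp [hf, eval_map, eval₂_at_zero, coeff_zero_eq_eval_zero])
  refine El.of_mul_left hε ?_
  rw [he, D3.hmap]
  have h0' : IsUnit ((C.comp (evalRingHom 0) : A[X] →+* A[X]) a) := by
    have := h0.map C
    rwa [coeff_zero_eq_eval_zero] at this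
  apply D3.unitA h0'
  rw [← map_mul, ← map_mul, ← map_sub, h, map_one]
end part5

section part6
open Matrix Polynomial
section laurent
open LaurentPolynomial

theorem coprime_X_pow {A : Type*} [CommRing A] (p : A[X]) (h0 : IsUnit (p.coeff 0)) (n : ℕ) :
    IsCoprime ((X : A[X]) ^ n) p := by
  apply IsCoprime.pow_left
  obtain ⟨u, hu⟩ := h0
  refine ⟨-(Polynomial.C (↑u⁻¹ : A) * p.divX), Polynomial.C (↑u⁻¹ : A), ?_⟩
  have h1 := divX_mul_X_add p
  have h2 : Polynomial.C (↑u⁻¹ : A) * Polynomial.C (p.coeff 0) = 1 := by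
    rw [← hu, ← Polynomial.C_mul, Units.inv_mul, Polynomial.C_1]
  linear_combination h2 - Polynomial.C (↑u⁻¹ : A) * h1

theorem laurent_red {A : Type*} [CommRing A] (p : A[X]) (h0 : IsUnit (p.coeff 0))
    (g : A[T;T⁻¹]) : ∃ (c : A[T;T⁻¹]) (r : A[X]), g + c * toLaurent p = toLaurent r := by
  obtain ⟨n, f, hf⟩ := exists_T_pow g
  obtain ⟨α, β, h⟩ := coprime_X_pow p h0 n
  have h' := congrArg (toLaurent (R := A)) h
  rw [map_add, map_mul, map_mul, map_one, toLaurent_X_pow] at h'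
  refine ⟨-(toLaurent β * g), α * f, ?_⟩
  rw [map_mul, hf]
  linear_combination (-g) * h'

section
variable {ι : Type*} [Fintype ι] [DecidableEq ι] {R : Type*} [CommRing R]

theorem Orb.elem {v w : ι → R} (i j : ι) (hij : i ≠ j) (c : R) (h1 : w i = v i + c * v j)
    (h2 : ∀ k, k ≠ i → w k = v k) : Orb v w := by
  have := Orb.add v j (Pi.single i c) (by simp [hij.symm])
  convert this using 1
  funext k
  by_cases hk : k = i
  · subst hk; simp [h1]
  · simp [hk, h2 k hk]

theorem Orb.weyl (v : ι → R) (i j : ι) (hij : i ≠ j) (u : Rˣ) :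
    Orb v (Function.update (Function.update v i (u * v j)) j (-(↑u⁻¹ : R) * v i)) := by
  refine Orb.trans (v := Function.update v i (v i + u * v j)) ?_ (Orb.trans
    (v := Function.update (Function.update v i (v i + u * v j)) j (-(↑u⁻¹ : R) * v i)) ?_ ?_)
  · exact Orb.elem i j hij u (by simp) (by intro k hk; simp [hk])
  · refine Orb.elem j i hij.symm (-(↑u⁻¹ : R)) ?_ (by intro k hk; simp [hk])
    simp [hij, hij.symm]
    linear_combination v j * u.inv_mul
  · refine Orb.elem i j hij u ?_ ?_
    · simp [hij, hij.symm]
    · intro k hk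
      by_cases hj : k = j
      · subst hj; simp
      · simp [hk, hj]

theorem Orb.scale (v : ι → R) (i j : ι) (hij : i ≠ j) (u : Rˣ) :
    ∃ w, Orb v w ∧ w i = (↑u⁻¹ : R) * v i := by
  refine ⟨_, (Orb.weyl v i j hij u).trans (Orb.weyl _ i j hij (-1)), ?_⟩
  simp [hij, hij.symm]
end

theorem laurent_col {ι : Type*} [Fintype ι] [DecidableEq ι] {A : Type*} [CommRing A] [IsDomain A]
    (h3 : ∀ j k : ι, ∃ l, l ≠ j ∧ l ≠ k) (i : ι) (v : ι → A[T;T⁻¹]) (p : A[X]) (hm : p.Monic)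
    (h0 : IsUnit (p.coeff 0)) (u : (A[T;T⁻¹])ˣ) (hv : v i = u * toLaurent p) (hu : Uni v) :
    Orb v (Pi.single i 1) := by
  obtain ⟨j, hj, -⟩ := h3 i i
  obtain ⟨w, hw, hwi⟩ := Orb.scale v i j hj.symm u
  rw [hv, Units.inv_mul_cancel_left] at hwi
  refine hw.trans ?_
  have huw : Uni w := Uni.orb hw hu
  choose c r hcr using fun k => laurent_red p h0 (w k)
  have h1 := Orb.add w i (Function.update c i 0) (by simp)
  set r' := Function.update r i p with hr'
  have e : (fun k => w k + Function.update c i 0 k * w i) = (toLaurent (R := A)) ∘ r' := by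
    funext k
    by_cases hk : k = i
    · subst hk; simp [r', hwi]
    · simp [r', hk, hwi, hcr]
  rw [e] at h1
  refine h1.trans ?_
  obtain ⟨x, hx⟩ := Uni.orb h1 huw
  have hr : Uni r' := by
    choose n f hf using fun k => exists_T_pow (x k)
    set N := ∑ k, n k
    have hN : ∀ k, n k ≤ N := fun k => Finset.single_le_sum (f := n) (by simp) (Finset.mem_univ k)
    have h2 : (fun k => f k * X ^ (N - n k)) ⬝ᵥ r' = X ^ N := by
      apply toLaurent_injective
      rw [toLaurent_X_pow, dotProduct, map_sum, ← one_mul (T (N : ℤ)), ← hx, dotProduct, Finset.sum_mul]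
      refine Finset.sum_congr rfl fun k _ => ?_
      rw [map_mul, map_mul, hf, toLaurent_X_pow, mul_assoc (x k), ← T_add]
      have : (n k : ℤ) + ((N - n k : ℕ) : ℤ) = N := by have := hN k; omega
      rw [this]; simp only [Function.comp]; ring
    obtain ⟨α, β, h⟩ := coprime_X_pow p h0 N
    refine ⟨α • (fun k => f k * X ^ (N - n k)) + Pi.single i β, ?_⟩
    rw [add_dotProduct, smul_dotProduct, h2, single_dotProduct, hr', Function.update_self, smul_eq_mul, h]
  have h5 := horrocks_global h3 i r' (by simpa [r'] using hm) (by simpa [r'] using h0) hr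
  have h6 := Orb.map (toLaurent (R := A)) h5
  convert h6 using 1
  funext k
  by_cases hk : k = i
  · subst hk; simp
  · simp [hk]

theorem laurent_D3 {A : Type*} [CommRing A] [IsDomain A]
    (a b c d : A[T;T⁻¹]) (p : A[X]) (hm : p.Monic)
    (h0 : IsUnit (p.coeff 0)) (u : (A[T;T⁻¹])ˣ) (hv : a = u * toLaurent p)
    (h : a * d - b * c = 1) : D3 a b c d ∈ El (Fin 3) A[T;T⁻¹] := by
  have hU : D3 (↑u⁻¹ : A[T;T⁻¹]) 0 0 u ∈ El (Fin 3) A[T;T⁻¹] := by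
    apply D3.unitA
    · exact u⁻¹.isUnit
    · simp
  have hmul : D3 (↑u⁻¹ : A[T;T⁻¹]) 0 0 u * D3 a b c d = D3 (↑u⁻¹ * a) (↑u⁻¹ * b) (u * c) (u * d) := by
    ext i j; fin_cases i <;> fin_cases j <;> simp [D3, Matrix.mul_apply, Fin.sum_univ_three]
  apply El.of_mul_left hU
  rw [hmul, hv, Units.inv_mul_cancel_left]
  have h' : toLaurent p * (u * d) - (↑u⁻¹ * b) * (u * c) = 1 := by
    rw [← h, hv]; linear_combination (- b * c) * u.inv_mul
  generalize (↑u⁻¹ * b) = b1 at *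
  generalize (u * c) = c1 at *
  generalize (u * d) = d1 at *
  obtain ⟨t, b2, hb⟩ := laurent_red p h0 b1
  obtain ⟨s, c2, hc⟩ := laurent_red p h0 c1
  apply D3.colB t
  apply D3.rowB s
  rw [hb, hc]
  have h'' : toLaurent p * (d1 + t * c1 + s * toLaurent b2) - toLaurent b2 * toLaurent c2 = 1 := by
    rw [← hb, ← hc]; linear_combination h'
  generalize (d1 + t * c1 + s * toLaurent b2) = d2 at *
  obtain ⟨n, f, hf⟩ := exists_T_pow d2
  obtain ⟨α, β, hab⟩ := coprime_X_pow p h0 n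
  have e1 : p * f = X ^ n * (1 + b2 * c2) := by
    apply toLaurent_injective
    simp only [map_mul, map_add, toLaurent_X_pow, map_one]
    rw [hf]; linear_combination (T (n : ℤ)) * h''
  have hd : d2 = toLaurent (α * f + β * (1 + b2 * c2)) := by
    have h1 := congrArg (toLaurent (R := A)) hab
    simp only [map_mul, map_add, toLaurent_X_pow, map_one] at h1 ⊢
    rw [hf]
    linear_combination (-d2) * h1 + toLaurent β * h''
  rw [hd, ← D3.hmap]
  refine El.map _ (murthy_global _ _ _ _ hm h0 ?_)
  apply toLaurent_injective
  rw [map_sub, map_mul, map_mul, ← hd, h'', map_one]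

end laurent
end part6

section part7
open Matrix Polynomial
section descent
open LaurentPolynomial
universe uR

/-- Every nonzero element becomes, up to a unit, a monic polynomial with invertible constant
coefficient, in a suitable presentation of the ring as a Laurent polynomial ring. -/
def LP (R : Type uR) [CommRing R] : Prop :=
  ∀ f : R, f ≠ 0 → ∃ (A : Type uR) (_ : CommRing A) (_ : IsDomain A) (ψ : R ≃+* A[T;T⁻¹])
    (p : A[X]) (u : (A[T;T⁻¹])ˣ), p.Monic ∧ IsUnit (p.coeff 0) ∧ ψ f = u * toLaurent p

variable {R : Type uR} [CommRing R]

theorem LP.col [Nontrivial R] (hR : LP R) {ι : Type*} [Fintype ι] [DecidableEq ι]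
    (h3 : ∀ j k : ι, ∃ l, l ≠ j ∧ l ≠ k) (i0 : ι) (v : ι → R) (hu : Uni v) :
    Orb v (Pi.single i0 1) := by
  obtain ⟨x, hx⟩ := hu
  have : ∃ i, v i ≠ 0 := by
    by_contra! hv
    have : v = 0 := funext hv
    rw [this, dotProduct_zero] at hx
    exact zero_ne_one hx
  obtain ⟨i, hi⟩ := this
  obtain ⟨A, _, _, ψ, p, u, hp, h0, e⟩ := hR _ hi
  have h1 : Uni (ψ ∘ v) := ⟨ψ ∘ x, by
    have := congrArg ψ hx
    rw [map_one] at this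
    rw [← this, dotProduct, dotProduct, map_sum]
    simp⟩
  have h2 := Orb.map (ψ.symm : A[T;T⁻¹] →+* R) (laurent_col h3 i (ψ ∘ v) p hp h0 u e h1)
  refine Orb.trans ?_ (Orb.single_single i i0)
  convert h2 using 1
  · funext k; simp
  · funext k
    by_cases hk : k = i
    · subst hk; simp
    · simp [hk]

theorem LP.D3 [Nontrivial R] (hR : LP R) (a b c d : R) (h : a * d - b * c = 1) : D3 a b c d ∈ El (Fin 3) R := by
  have main : ∀ a b c d : R, a ≠ 0 → a * d - b * c = 1 → _root_.D3 a b c d ∈ El (Fin 3) R := by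
    intro a b c d ha h
    obtain ⟨A, _, _, ψ, p, u, hp, h0, e⟩ := hR _ ha
    have h1 := El.map (ψ.symm : A[T;T⁻¹] →+* R) (laurent_D3 (ψ a) (ψ b) (ψ c) (ψ d) p hp h0 u e
      (by rw [← map_mul, ← map_mul, ← map_sub, h, map_one]))
    rw [D3.hmap] at h1
    simpa using h1
  by_cases ha : a = 0
  · apply D3.rowA 1
    refine main _ _ _ _ ?_ (by linear_combination h)
    intro hc
    rw [ha, zero_add, one_mul] at hc
    rw [ha, hc] at h
    simp at h
  · exact main _ _ _ _ ha h

/-- `1 ⊕ N` -/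
def J1 {n : ℕ} (N : Matrix (Fin n) (Fin n) R) : Matrix (Fin (n + 1)) (Fin (n + 1)) R :=
  Matrix.of (Fin.cons (Pi.single 0 1) (fun i => Fin.cons 0 (N i)))

theorem J1_mul {n : ℕ} (N N' : Matrix (Fin n) (Fin n) R) : J1 (N * N') = J1 N * J1 N' := by
  ext i j
  refine Fin.cases ?_ (fun i => ?_) i <;> refine Fin.cases ?_ (fun j => ?_) j <;>
    simp [J1, Matrix.mul_apply, Fin.sum_univ_succ]

theorem J1_one {n : ℕ} : J1 (1 : Matrix (Fin n) (Fin n) R) = 1 := by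
  ext i j
  refine Fin.cases ?_ (fun i => ?_) i <;> refine Fin.cases ?_ (fun j => ?_) j <;>
    simp [J1, Matrix.one_apply, Fin.succ_ne_zero, (Fin.succ_ne_zero _).symm]

theorem J1_tv {n : ℕ} (i j : Fin n) (c : R) :
    J1 (transvection i j c) = transvection i.succ j.succ c := by
  ext k l
  refine Fin.cases ?_ (fun k => ?_) k <;> refine Fin.cases ?_ (fun l => ?_) l <;>
    simp [J1, transvection, Matrix.one_apply, Matrix.single_apply, Fin.succ_ne_zero, (Fin.succ_ne_zero _).symm]

theorem J1_det {n : ℕ} (N : Matrix (Fin n) (Fin n) R) : (J1 N).det = N.det := by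
  rw [Matrix.det_succ_row_zero, Fin.sum_univ_succ]
  have : (J1 N).submatrix Fin.succ (Fin.succAbove 0) = N := by
    ext i j; simp [J1]
  rw [this]
  simp [J1]

theorem J1_El {n : ℕ} {N : Matrix (Fin n) (Fin n) R} (h : N ∈ El (Fin n) R) :
    J1 N ∈ El (Fin (n + 1)) R := by
  induction h using Submonoid.closure_induction with
  | mem x hx =>
    obtain ⟨i, j, c, hij, rfl⟩ := hx
    rw [J1_tv]
    exact El.tv (by simpa using hij) _
  | one => rw [J1_one]; exact one_mem _
  | mul x y _ _ hx hy => rw [J1_mul]; exact mul_mem hx hy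

theorem El.det {ι : Type*} [Fintype ι] [DecidableEq ι] {M : Matrix ι ι R} (h : M ∈ El ι R) :
    M.det = 1 := by
  induction h using Submonoid.closure_induction with
  | mem x hx =>
    obtain ⟨i, j, c, hij, rfl⟩ := hx
    exact Matrix.det_transvection_of_ne _ _ hij _
  | one => simp
  | mul x y _ _ hx hy => rw [Matrix.det_mul, hx, hy, one_mul]

theorem LP.step [Nontrivial R] (hR : LP R) {n : ℕ} (h3 : ∀ j k : Fin (n + 1), ∃ l, l ≠ j ∧ l ≠ k)
    (M : Matrix (Fin (n + 1)) (Fin (n + 1)) R) (hM : M.det = 1) :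
    ∃ N : Matrix (Fin n) (Fin n) R, N.det = 1 ∧ (J1 N ∈ El (Fin (n + 1)) R → M ∈ El (Fin (n + 1)) R) := by
  obtain ⟨ε, hε, he⟩ := hR.col h3 0 (fun i => M i 0) ⟨fun j => M.adjugate 0 j, by
    have := congrFun (congrFun (Matrix.adjugate_mul M) 0) 0
    rw [hM, one_smul, Matrix.mul_apply] at this
    rw [dotProduct, this]; simp⟩
  set M1 := ε * M with hM1
  have hc : ∀ i, M1 i 0 = (Pi.single 0 1 : Fin (n + 1) → R) i := by
    intro i
    rw [← he]; rfl
  set r : Fin (n + 1) → R := Fin.cons 0 (fun j => - M1 0 j.succ) with hr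
  have hrow := El.row (R := R) (0 : Fin (n + 1)) r (by simp [r])
  have key : M1 * (1 + vecMulVec (Pi.single 0 1) r) = J1 (M1.submatrix Fin.succ Fin.succ) := by
    rw [mul_add, mul_one, mul_vecMulVec]
    have : M1 *ᵥ Pi.single 0 1 = Pi.single 0 1 := by
      ext i; rw [mulVec_single_one]; exact hc i
    rw [this]
    ext i j
    refine Fin.cases ?_ (fun i => ?_) i <;> refine Fin.cases ?_ (fun j => ?_) j <;>
      simp [J1, vecMulVec_apply, hc, r]
  refine ⟨M1.submatrix Fin.succ Fin.succ, ?_, ?_⟩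
  · rw [← J1_det, ← key, Matrix.det_mul, El.det hrow, hM1, Matrix.det_mul, El.det hε, hM]; simp
  · intro h
    rw [← key] at h
    exact El.of_mul_left hε (El.of_mul_right hrow h)

theorem LP.main [Nontrivial R] (hR : LP R) (n : ℕ) : ∀ M : Matrix (Fin (n + 3)) (Fin (n + 3)) R, M.det = 1 →
    M ∈ El (Fin (n + 3)) R := by
  have h3 : ∀ n : ℕ, ∀ j k : Fin (n + 2 + 1), ∃ l, l ≠ j ∧ l ≠ k := by
    intro n j k
    have : ({j, k} : Finset (Fin (n + 2 + 1))).card < Fintype.card (Fin (n + 2 + 1)) := by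
      have := Finset.card_le_two (a := j) (b := k)
      simp; omega
    obtain ⟨l, hl⟩ := Finset.exists_mem_notMem_of_card_lt_card (s := {j, k}) (t := Finset.univ) this
    simp at hl
    exact ⟨l, hl.1, hl.2⟩
  induction n with
  | zero =>
    intro M hM
    obtain ⟨N, hN, h⟩ := hR.step (h3 0) M hM
    apply h
    rw [Matrix.det_fin_two] at hN
    have := hR.D3 _ _ _ _ hN
    convert this using 1
    ext i j
    fin_cases i <;> fin_cases j <;> rfl
  | succ n ih =>
    intro M hM
    obtain ⟨N, hN, h⟩ := hR.step (h3 (n + 1)) M hM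
    exact h (J1_El (ih N hN))

end descent
end part7

section part8
open Matrix Polynomial
section mono
open LaurentPolynomial

theorem laurent_normal {A : Type*} [CommRing A] [IsDomain A] (g : A[T;T⁻¹]) (hg : g ≠ 0)
    (hc : ∀ z, g.coeff z = 0 ∨ IsUnit (g.coeff z)) :
    ∃ (p : A[X]) (u : (A[T;T⁻¹])ˣ), p.Monic ∧ IsUnit (p.coeff 0) ∧ g = u * toLaurent p := by
  obtain ⟨n, f, hf⟩ := exists_T_pow g
  have hf0 : f ≠ 0 := by
    rintro rfl
    rw [map_zero] at hf
    exact hg ((isUnit_T (n : ℤ)).mul_left_eq_zero.mp hf.symm)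
  have hfc : ∀ i, f.coeff i = 0 ∨ IsUnit (f.coeff i) := by
    intro i
    have h1 : f.coeff i = g.coeff ((i : ℤ) - n) := by
      have h2 : (toLaurent f).coeff (i : ℤ) = f.coeff i := by
        rw [coeff_toLaurent]
        exact Finsupp.mapDomain_apply Nat.cast_injective _ _
      rw [← h2, hf, T, AddMonoidAlgebra.coeff_mul_single_apply, mul_one, sub_eq_add_neg]
    rw [h1]; exact hc _
  obtain ⟨q, hq, hX⟩ := exists_eq_pow_rootMultiplicity_mul_and_not_dvd f hf0 0
  rw [Polynomial.C_0, sub_zero] at hq hX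
  generalize rootMultiplicity 0 f = k at hq
  have hqc : ∀ i, q.coeff i = 0 ∨ IsUnit (q.coeff i) := by
    intro i
    have := hfc (i + k)
    rwa [hq, coeff_X_pow_mul] at this
  have hq0 : q ≠ 0 := by rintro rfl; simp at hX
  obtain ⟨l, hl⟩ := (hqc q.natDegree).resolve_left (leadingCoeff_ne_zero.mpr hq0)
  have h0 := (hqc 0).resolve_left (fun h => hX (X_dvd_iff.mpr h))
  refine ⟨Polynomial.C (↑l⁻¹ : A) * q, (isUnit_T (-(n : ℤ))).unit * (isUnit_T (k : ℤ)).unit *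
    Units.map (LaurentPolynomial.C (R := A) : A →* A[T;T⁻¹]) l, ?_, ?_, ?_⟩
  · rw [Monic, leadingCoeff_mul, leadingCoeff_C, leadingCoeff, ← hl, Units.inv_mul]
  · rw [coeff_C_mul]; exact l⁻¹.isUnit.mul h0
  · have e1 : g = T (-(n : ℤ)) * toLaurent f := by
      rw [hf, mul_comm, mul_assoc, ← T_add]; simp
    rw [e1, hq]
    simp only [map_mul, toLaurent_X_pow, Polynomial.toLaurent_C, Units.val_mul, IsUnit.unit_spec,
      Units.coe_map, MonoidHom.coe_coe]
    have e2 : LaurentPolynomial.C (R := A) l * LaurentPolynomial.C (R := A) (↑l⁻¹ : A) = 1 := by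
      rw [← map_mul, Units.mul_inv, map_one]
    linear_combination (- T (-(n : ℤ)) * T (k : ℤ) * toLaurent q) * e2

/-- the weight of an exponent vector -/
def wt {m : ℕ} (x : ℤ) (k : Fin m →₀ ℤ) : ℤ := ∑ i, k i * x ^ (i : ℕ)

theorem exists_wt {m : ℕ} (S : Finset (Fin m →₀ ℤ)) : ∃ x : ℤ, Set.InjOn (wt x) (S : Set (Fin m →₀ ℤ)) := by
  classical
  set P : (Fin m →₀ ℤ) → ℤ[X] := fun d => ∑ i, Polynomial.C (d i) * X ^ (i : ℕ) with hP
  have hP0 : ∀ d, d ≠ 0 → P d ≠ 0 := by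
    intro d hd h
    apply hd
    ext j
    have := congrArg (fun q => Polynomial.coeff q (j : ℕ)) h
    simp only [hP, finsetSum_coeff, coeff_C_mul, coeff_X_pow, Polynomial.coeff_zero] at this
    rw [Finset.sum_eq_single j] at this
    · simpa using this
    · intro b _ hb
      rw [if_neg (fun h => hb (Fin.ext h.symm)), mul_zero]
    · simp
  set Q := ∏ s ∈ S.offDiag, P (s.1 - s.2) with hQ
  have hQ0 : Q ≠ 0 := by
    rw [hQ, Finset.prod_ne_zero_iff]
    intro s hs
    rw [Finset.mem_offDiag] at hs
    exact hP0 _ (sub_ne_zero.mpr hs.2.2)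
  obtain ⟨x, hx⟩ : ∃ x, Q.eval x ≠ 0 := by
    by_contra! h
    exact hQ0 (Polynomial.funext (by simpa using h))
  refine ⟨x, ?_⟩
  intro a ha b hb hab
  by_contra hne
  rw [hQ, eval_prod, Finset.prod_ne_zero_iff] at hx
  apply hx (a, b) (Finset.mem_offDiag.mpr ⟨ha, hb, hne⟩)
  simp only [hP, eval_finsetSum, eval_mul, eval_C, eval_pow, eval_X, Finsupp.sub_apply, sub_mul,
    Finset.sum_sub_distrib]
  exact sub_eq_zero.mpr hab

/-- change of coordinates on exponents -/
noncomputable def wtEquiv (m : ℕ) (x : ℤ) : (Fin (m + 1) →₀ ℤ) ≃+ ℤ × (Fin m →₀ ℤ) where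
  toFun k := (wt x k, Finsupp.tail k)
  invFun a := Finsupp.cons (a.1 - ∑ i : Fin m, a.2 i * x ^ ((i : ℕ) + 1)) a.2
  left_inv k := by
    ext i
    refine Fin.cases ?_ (fun i => ?_) i
    · simp [wt, Fin.sum_univ_succ, Finsupp.tail_apply]
    · simp [Finsupp.tail_apply]
  right_inv a := by
    refine Prod.ext ?_ ?_
    · simp [wt, Fin.sum_univ_succ]
    · simp
  map_add' a b := by
    refine Prod.ext ?_ ?_
    · simp [wt, add_mul, Finset.sum_add_distrib]
    · ext i; simp [Finsupp.tail_apply]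

theorem LP_laurent {K : Type*} [Field K] (m : ℕ) : LP (AddMonoidAlgebra K (Fin (m + 1) →₀ ℤ)) := by
  classical
  intro f hf
  obtain ⟨x, hx⟩ := exists_wt f.coeff.support
  let ψ : AddMonoidAlgebra K (Fin (m + 1) →₀ ℤ) ≃+* (AddMonoidAlgebra K (Fin m →₀ ℤ))[T;T⁻¹] :=
    (AddMonoidAlgebra.domCongr K K (wtEquiv m x)).toRingEquiv.trans AddMonoidAlgebra.curryRingEquiv
  have hψ : ∀ k r, ψ (.single k r) = .single (wt x k) (.single (Finsupp.tail k) r) := by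
    intro k r
    simp [ψ, wtEquiv]
  have hU : ∀ (k : Fin m →₀ ℤ) (r : K), r ≠ 0 → IsUnit (AddMonoidAlgebra.single k r) := by
    intro k r hr
    refine IsUnit.of_mul_eq_one (AddMonoidAlgebra.single (-k) r⁻¹) ?_
    rw [AddMonoidAlgebra.single_mul_single, add_neg_cancel, mul_inv_cancel₀ hr]; rfl
  have hcoeff : ∀ z, (ψ f).coeff z = ∑ k ∈ f.coeff.support,
      if wt x k = z then AddMonoidAlgebra.single (Finsupp.tail k) (f.coeff k) else 0 := by
    intro z
    conv_lhs => rw [← AddMonoidAlgebra.sum_coeff_single f, Finsupp.sum, map_sum]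
    rw [AddMonoidAlgebra.coeff_sum, Finsupp.finsetSum_apply]
    refine Finset.sum_congr rfl fun k _ => ?_
    rw [hψ, AddMonoidAlgebra.coeff_single, Finsupp.single_apply]
  obtain ⟨p, u, h1, h2, h3⟩ := laurent_normal (ψ f) (by simpa using hf) (by
    intro z
    rw [hcoeff]
    by_cases h : ∃ k ∈ f.coeff.support, wt x k = z
    · obtain ⟨k, hk, rfl⟩ := h
      right
      rw [Finset.sum_eq_single k]
      · rw [if_pos rfl]
        exact hU _ _ (Finsupp.mem_support_iff.mp hk)
      · intro b hb hbk
        rw [if_neg (fun h => hbk (hx hb hk h))]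
      · intro h; exact absurd hk h
    · left
      push Not at h
      exact Finset.sum_eq_zero fun k hk => if_neg (h k hk))
  exact ⟨_, _, inferInstance, ψ, p, u, h1, h2, h3⟩

end mono
end part8

theorem El_to_elemSL {n : ℕ} {R : Type*} [CommRing R] {M : Matrix (Fin n) (Fin n) R}
    (h : M ∈ El (Fin n) R) : ∃ g ∈ elemSL n R, (g : Matrix (Fin n) (Fin n) R) = M := by
  induction h using Submonoid.closure_induction with
  | mem x hx =>
    obtain ⟨i, j, c, hij, rfl⟩ := hx
    exact ⟨⟨Matrix.transvection i j c, Matrix.det_transvection_of_ne _ _ hij _⟩,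
      Subgroup.subset_closure ⟨i, j, c, hij, rfl⟩, rfl⟩
  | one => exact ⟨1, one_mem _, by simp⟩
  | mul x y _ _ hx hy =>
    obtain ⟨a, ha, rfl⟩ := hx
    obtain ⟨b, hb, rfl⟩ := hy
    exact ⟨a * b, mul_mem ha hb, by simp⟩

/-- `SL_n(K[x₁^{±1},…,x_m^{±1}]) = E_n(K[x₁^{±1},…,x_m^{±1}])` for a field `K` and `n ≥ 3`:
every Laurent polynomial matrix of determinant 1 over a field is a product of elementary
matrices. -/
theorem SL_laurent_eq_elementary (n : ℕ) (hn : 3 ≤ n) (K : Type*) [Field K]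
    (m : ℕ) (hm : 1 ≤ m) :
    ∀ g : Matrix.SpecialLinearGroup (Fin n) (LaurentRing K m),
      g ∈ elemSL n (LaurentRing K m) := by
  intro g
  obtain ⟨m, rfl⟩ := Nat.exists_eq_add_of_le' hm
  obtain ⟨n, rfl⟩ := Nat.exists_eq_add_of_le' hn
  obtain ⟨h, hh, e⟩ := El_to_elemSL ((LP_laurent (K := K) m).main n g.1 g.2)
  rwa [← Subtype.ext e]
end

section
/- Let A be a commutative ring and n ≥ 3. If g(X) ∈ GL_n(A[X]) satisfies g(0) = 1 and for every maximal ideal m of A the image of g(X) in GL_n(A_m[X]) lies in E_n(A_m[X]), then g(X) ∈ E_n(A[X]). -/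
/-- The elementary subgroup `E_n(R) ⊆ GL_n(R)`. -/
def elemGL (n : ℕ) (R : Type*) [CommRing R] : Subgroup (GL (Fin n) R) :=
  Subgroup.closure {g | ∃ (i j : Fin n) (a : R), i ≠ j ∧
    (g : Matrix (Fin n) (Fin n) R) = Matrix.transvection i j a}

/-- The homomorphism `GL_n(R) → GL_n(S)` induced by a ring homomorphism. -/
def glMap {n : ℕ} {R S : Type*} [CommRing R] [CommRing S] (f : R →+* S) :
    GL (Fin n) R →* GL (Fin n) S := Units.map (RingHom.mapMatrix f).toMonoidHom

section Helpers
open Polynomial Matrix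

/-- A matrix underlying an element of the elementary subgroup. -/
def IsElemMat {n : ℕ} {R : Type*} [CommRing R] (M : Matrix (Fin n) (Fin n) R) : Prop :=
  ∃ g ∈ elemGL n R, (g : Matrix (Fin n) (Fin n) R) = M

section Elem
variable {n : ℕ} {R : Type*} [CommRing R]

lemma IsElemMat.one : IsElemMat (1 : Matrix (Fin n) (Fin n) R) := ⟨1, one_mem _, rfl⟩

lemma IsElemMat.mul {M N : Matrix (Fin n) (Fin n) R} (hM : IsElemMat M) (hN : IsElemMat N) :
    IsElemMat (M * N) := by
  obtain ⟨g, hg, rfl⟩ := hM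
  obtain ⟨h, hh, rfl⟩ := hN
  exact ⟨g * h, mul_mem hg hh, rfl⟩

/-- The transvection as an element of `GL`. -/
def tvGL (i j : Fin n) (h : i ≠ j) (a : R) : GL (Fin n) R where
  val := transvection i j a
  inv := transvection i j (-a)
  val_inv := by rw [transvection_mul_transvection_same _ _ h]; simp
  inv_val := by rw [transvection_mul_transvection_same _ _ h]; simp

lemma tvGL_mem (i j : Fin n) (h : i ≠ j) (a : R) : tvGL i j h a ∈ elemGL n R :=
  Subgroup.subset_closure ⟨i, j, a, h, rfl⟩

lemma one_add_mul_right (v w w' : Fin n → R) (h : w ⬝ᵥ v = 0) :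
    (1 + vecMulVec v w) * (1 + vecMulVec v w') = 1 + vecMulVec v (w + w') := by
  rw [mul_add, add_mul, add_mul, vecMulVec_mul_vecMulVec, h, vecMulVec_add]
  simp; abel

lemma one_add_mul_left (v v' w : Fin n → R) (h : w ⬝ᵥ v' = 0) :
    (1 + vecMulVec v w) * (1 + vecMulVec v' w) = 1 + vecMulVec (v + v') w := by
  rw [mul_add, add_mul, add_mul, vecMulVec_mul_vecMulVec, h, add_vecMulVec]
  simp; abel

lemma sum_right (Q : Matrix (Fin n) (Fin n) R → Prop) (h1 : Q 1)
    (hmul : ∀ M N, Q M → Q N → Q (M * N)) {ι : Type*} (s : Finset ι) (v : Fin n → R)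
    (w : ι → Fin n → R) (h0 : ∀ i, w i ⬝ᵥ v = 0) (hQ : ∀ i, Q (1 + vecMulVec v (w i))) :
    Q (1 + vecMulVec v (∑ i ∈ s, w i)) := by
  classical
  induction s using Finset.induction_on with
  | empty => simpa using h1
  | insert a s ha ih =>
    rw [Finset.sum_insert ha, ← one_add_mul_right _ _ _ (h0 a)]
    exact hmul _ _ (hQ a) ih

lemma sum_left (Q : Matrix (Fin n) (Fin n) R → Prop) (h1 : Q 1)
    (hmul : ∀ M N, Q M → Q N → Q (M * N)) {ι : Type*} (s : Finset ι) (v : ι → Fin n → R)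
    (w : Fin n → R) (h0 : ∀ i, w ⬝ᵥ v i = 0) (hQ : ∀ i, Q (1 + vecMulVec (v i) w)) :
    Q (1 + vecMulVec (∑ i ∈ s, v i) w) := by
  classical
  induction s using Finset.induction_on with
  | empty => simpa using h1
  | insert a s ha ih =>
    rw [Finset.sum_insert ha, add_comm (v a), ← one_add_mul_left _ _ _ (h0 a)]
    exact hmul _ _ ih (hQ a)

lemma vecMulVec_single_single' (i j : Fin n) (a b : R) :
    vecMulVec (Pi.single i a) (Pi.single j b) = Matrix.single i j (a * b) := by
  ext k l
  simp only [vecMulVec_apply, Pi.single_apply, Matrix.single_apply]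
  by_cases h : k = i <;> by_cases h' : l = j <;> simp [h, h', Ne.symm, eq_comm (a := i), eq_comm (a := j)]

lemma isElem_single (i j : Fin n) (h : i ≠ j) (a b : R) :
    IsElemMat (1 + vecMulVec (Pi.single i a) (Pi.single j b)) := by
  rw [vecMulVec_single_single']
  exact ⟨_, tvGL_mem i j h (a * b), rfl⟩

lemma isElem_left (v : Fin n → R) (j : Fin n) (b : R) (hv : v j = 0) :
    IsElemMat (1 + vecMulVec v (Pi.single j b)) := by
  rw [← Finset.univ_sum_single v]
  refine sum_left _ .one (fun _ _ => .mul) _ _ _ (fun i => ?_) (fun i => ?_)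
  · by_cases h : i = j
    · subst h; simp [hv]
    · simp [h]
  · by_cases h : i = j
    · subst h; simpa [hv] using .one
    · exact isElem_single _ _ h _ _

lemma isElem_right (w : Fin n → R) (i : Fin n) (a : R) (hw : w i = 0) :
    IsElemMat (1 + vecMulVec (Pi.single i a) w) := by
  rw [← Finset.univ_sum_single w]
  refine sum_right _ .one (fun _ _ => .mul) _ _ _ (fun j => ?_) (fun j => ?_)
  · by_cases h : i = j
    · subst h; simp [hw]
    · simp [h]
  · by_cases h : i = j
    · subst h; simpa [hw] using .one
    · exact isElem_single _ _ h _ _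

lemma comm_identity (p w q r : Fin n → R) (qp : q ⬝ᵥ p = 0) (wr : w ⬝ᵥ r = 0) (qr : q ⬝ᵥ r = 1)
    (wp : w ⬝ᵥ p = 0) :
    (1 + vecMulVec p q) * (1 + vecMulVec r w) * (1 + vecMulVec (-p) q) * (1 + vecMulVec (-r) w)
      = 1 + vecMulVec p w := by
  simp only [mul_add, add_mul, vecMulVec_mul_vecMulVec, qp, wr, qr, wp, neg_vecMulVec,
    mul_neg, neg_mul, mul_one, one_mul, zero_smul, vecMulVec_zero, one_smul, zero_mul]
  abel

/-- Vaserstein-type lemma. -/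
lemma isElem_koszul (hn : 3 ≤ n) (v : Fin n → R) (c : R) (k l : Fin n) :
    IsElemMat (1 + vecMulVec v (c • (Pi.single k (v l) - Pi.single l (v k)))) := by
  by_cases hkl : k = l
  · subst hkl; simpa using .one
  obtain ⟨m, hmk, hml⟩ : ∃ m : Fin n, m ≠ k ∧ m ≠ l := by
    have : ∃ m : Fin n, m ∉ ({k, l} : Finset (Fin n)) := by
      by_contra! h
      have h1 := Finset.card_le_card (s := Finset.univ) (t := {k, l}) (fun x _ => h x)
      have h2 := Finset.card_le_two (a := k) (b := l)
      simp at h1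
      omega
    simpa using this
  set w : Fin n → R := c • (Pi.single k (v l) - Pi.single l (v k)) with hw
  set p : Fin n → R := Pi.single k (v k) + Pi.single l (v l) with hp
  have wk : w k = c * v l := by simp [hw, hkl]
  have wl : w l = - (c * v k) := by simp [hw, Ne.symm hkl]
  have wm : w m = 0 := by simp [hw, hmk, hml]
  have pk : p k = v k := by simp [hp, hkl]
  have pl : p l = v l := by simp [hp, Ne.symm hkl]
  have pm : p m = 0 := by simp [hp, hmk, hml]
  have wp : w ⬝ᵥ p = 0 := by
    rw [hp, dotProduct_add, dotProduct_single, dotProduct_single, wk, wl]; ring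
  have e : v = (v - p) + p := by simp
  have hww : w = Pi.single k (w k) + Pi.single l (w l) := by
    rw [wk, wl]; ext x
    simp only [hw, Pi.smul_apply, Pi.sub_apply, Pi.add_apply, Pi.single_apply, smul_eq_mul]
    split_ifs <;> ring
  have key : IsElemMat ((1 + vecMulVec (v - p) w) * (1 + vecMulVec p w)) := by
    refine .mul ?_ ?_
    · rw [hww, ← one_add_mul_right]
      · exact .mul (isElem_left _ _ _ (by simp [pk])) (isElem_left _ _ _ (by simp [pl]))
      · simp [pk]
    · rw [← comm_identity p w (Pi.single m 1) (Pi.single m 1) (by simp [pm]) (by simp [wm])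
        (by simp) wp, ← Pi.single_neg]
      exact .mul (.mul (.mul (isElem_left _ _ _ pm) (isElem_right _ _ _ wm))
        (isElem_left _ _ _ (by simp [pm]))) (isElem_right _ _ _ wm)
  rwa [one_add_mul_left _ _ _ wp, ← e] at key

lemma koszul_decomp (v w u : Fin n → R) (hwv : w ⬝ᵥ v = 0) (huv : u ⬝ᵥ v = 1) :
    w = ∑ x : Fin n × Fin n,
      (w x.1 * u x.2) • (Pi.single x.1 (v x.2) - Pi.single x.2 (v x.1) : Fin n → R) := by
  rw [Fintype.sum_prod_type]
  ext a
  simp only [Finset.sum_apply, Pi.smul_apply, Pi.sub_apply, smul_eq_mul, mul_sub,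
    Finset.sum_sub_distrib, Pi.single_apply, mul_ite, mul_zero]
  have h1 : ∑ x, ∑ x_1, (if a = x then w x * u x_1 * v x_1 else 0) = w a := by
    rw [Finset.sum_comm]
    simp only [Finset.sum_ite_eq, Finset.mem_univ, if_true, mul_assoc, ← Finset.mul_sum]
    rw [show ∑ i, u i * v i = 1 from huv, mul_one]
  have h2 : ∑ x, ∑ x_1, (if a = x_1 then w x * u x_1 * v x else 0) = 0 := by
    simp only [Finset.sum_ite_eq, Finset.mem_univ, if_true]
    calc _ = u a * ∑ x, w x * v x := by rw [Finset.mul_sum]; exact Finset.sum_congr rfl (fun _ _ => by ring)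
      _ = 0 := by rw [show ∑ i, w i * v i = 0 from hwv, mul_zero]
  rw [h1, h2, sub_zero]

end Elem

section GLMap
variable {n : ℕ} {R S T : Type*} [CommRing R] [CommRing S] [CommRing T]

lemma coe_glMap (f : R →+* S) (g : GL (Fin n) R) :
    ((glMap f g : GL (Fin n) S) : Matrix (Fin n) (Fin n) S)
      = (g : Matrix (Fin n) (Fin n) R).map f := rfl

lemma glMap_glMap (f : R →+* S) (h : S →+* T) (g : GL (Fin n) R) :
    glMap h (glMap f g) = glMap (h.comp f) g := by
  ext i j; rfl

lemma glMap_mem (f : R →+* S) {g : GL (Fin n) R} (hg : g ∈ elemGL n R) :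
    glMap f g ∈ elemGL n S := by
  unfold elemGL at hg
  induction hg using Subgroup.closure_induction with
  | mem x hx =>
    obtain ⟨i, j, a, hij, hx⟩ := hx
    refine Subgroup.subset_closure ⟨i, j, f a, hij, ?_⟩
    rw [coe_glMap, hx, transvection, transvection, Matrix.map_add _ (map_add f),
      Matrix.map_one _ (map_zero f) (map_one f), Matrix.map_single]
  | one => rw [map_one]; exact one_mem _
  | mul x y _ _ hx hy => rw [map_mul]; exact mul_mem hx hy
  | inv x _ hx => rw [map_inv]; exact inv_mem hx

/-- The substitution `X ↦ s X`. -/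
noncomputable def sc (s : R) : R[X] →+* R[X] := eval₂RingHom C (C s * X)

@[simp] lemma sc_C (s a : R) : sc s (C a) = C a := by simp [sc]

@[simp] lemma sc_X (s : R) : sc s X = C s * X := by simp [sc]

lemma sc_comp (s t : R) : (sc s).comp (sc t) = sc (s * t) := by
  ext a
  · simp
  · simp only [RingHom.comp_apply, sc_X, map_mul, sc_C]
    rw [← mul_assoc, ← C_mul, mul_comm t, C_mul]

lemma coeff_sc (s : R) (p : R[X]) (k : ℕ) : (sc s p).coeff k = p.coeff k * s ^ k :=
  comp_C_mul_X_coeff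

lemma eval_comp_sc (s : R) : (evalRingHom (0 : R)).comp (sc s) = evalRingHom 0 := by
  ext a <;> simp

lemma map_comp_sc (f : R →+* S) (s : R) :
    (mapRingHom f).comp (sc s) = (sc (f s)).comp (mapRingHom f) := by
  ext a <;> simp

end GLMap

section Lift
variable {n : ℕ} {B R : Type*} [CommRing B] [CommRing R] [Algebra B R] (M : Submonoid B)

/-- After a substitution `X ↦ s X`, the matrix lifts to an elementary matrix over `B[X]`
which is trivial at `0`. -/
def LiftP (N : Matrix (Fin n) (Fin n) R[X]) : Prop :=
  ∃ s ∈ M, ∃ ε ∈ elemGL n B[X], glMap (evalRingHom (0 : B)) ε = 1 ∧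
    (ε : Matrix (Fin n) (Fin n) B[X]).map (mapRingHom (algebraMap B R)) =
      N.map (sc (algebraMap B R s))

lemma LiftP.enlarge (N : Matrix (Fin n) (Fin n) R[X]) (s t : B) (ε : GL (Fin n) B[X])
    (hε : ε ∈ elemGL n B[X]) (h0 : glMap (evalRingHom (0 : B)) ε = 1)
    (h : (ε : Matrix (Fin n) (Fin n) B[X]).map (mapRingHom (algebraMap B R)) =
      N.map (sc (algebraMap B R s))) :
    glMap (sc t) ε ∈ elemGL n B[X] ∧ glMap (evalRingHom (0 : B)) (glMap (sc t) ε) = 1 ∧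
    ((glMap (sc t) ε : GL (Fin n) B[X]) : Matrix (Fin n) (Fin n) B[X]).map
      (mapRingHom (algebraMap B R)) = N.map (sc (algebraMap B R (t * s))) := by
  refine ⟨glMap_mem _ hε, ?_, ?_⟩
  · rw [glMap_glMap, eval_comp_sc, h0]
  · rw [coe_glMap, map_mul, ← sc_comp]
    ext1 i j
    have h1 := congrFun (congrFun h i) j
    have h2 := RingHom.congr_fun (map_comp_sc (algebraMap B R) t) (ε i j)
    simp only [Matrix.map_apply, RingHom.comp_apply] at h1 h2 ⊢
    rw [h2, h1]

lemma LiftP.one : LiftP M (1 : Matrix (Fin n) (Fin n) R[X]) :=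
  ⟨1, one_mem _, 1, one_mem _, map_one _, by
    rw [Units.val_one, Matrix.map_one _ (map_zero _) (map_one _),
      Matrix.map_one _ (map_zero _) (map_one _)]⟩

variable {M} in
lemma LiftP.mul {N N' : Matrix (Fin n) (Fin n) R[X]} (h : LiftP M N) (h' : LiftP M N') :
    LiftP M (N * N') := by
  obtain ⟨s, hs, ε, hε, h0, h⟩ := h
  obtain ⟨s', hs', ε', hε', h0', h'⟩ := h'
  obtain ⟨a1, a2, a3⟩ := LiftP.enlarge N s s' ε hε h0 h
  obtain ⟨b1, b2, b3⟩ := LiftP.enlarge N' s' s ε' hε' h0' h'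
  refine ⟨s' * s, mul_mem hs' hs, _, mul_mem a1 b1, by rw [map_mul, a2, b2, one_mul], ?_⟩
  rw [mul_comm s s'] at b3
  rw [Units.val_mul, Matrix.map_mul, a3, b3, Matrix.map_mul]

variable {M} in
lemma LiftP.inv {g : GL (Fin n) R[X]} (h : LiftP M (g : Matrix (Fin n) (Fin n) R[X])) :
    LiftP M ((g⁻¹ : GL (Fin n) R[X]) : Matrix (Fin n) (Fin n) R[X]) := by
  obtain ⟨s, hs, ε, hε, h0, h⟩ := h
  refine ⟨s, hs, ε⁻¹, inv_mem hε, by rw [map_inv, h0, inv_one], ?_⟩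
  have : glMap (mapRingHom (algebraMap B R)) ε = glMap (sc (algebraMap B R s)) g :=
    Units.ext h
  rw [← coe_glMap, ← coe_glMap, map_inv, map_inv, this]

variable [IsLocalization M R]

lemma LiftP.koszul (hn : 3 ≤ n) (F : R[X]) (v : Fin n → R) (k l : Fin n) :
    LiftP M (1 + vecMulVec (fun i => C (v i))
      ((X * F) • (Pi.single k (C (v l)) - Pi.single l (C (v k)) : Fin n → R[X]))) := by
  obtain ⟨⟨s, hs⟩, hv⟩ := IsLocalization.exist_integer_multiples_of_finite M v
  obtain ⟨t, ht, hF⟩ := IsLocalization.integerNormalization_spec M F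
  set F' := IsLocalization.integerNormalization M F
  choose v' hv' using hv
  set r := t * s * s with hr
  obtain ⟨ε, hε, hεe⟩ := isElem_koszul hn (fun i => C (v' i)) (X * sc r F') k l
  refine ⟨r, mul_mem (mul_mem ht hs) hs, ε, hε, ?_, ?_⟩
  · ext i j
    rw [coe_glMap, hεe]
    simp only [Matrix.map_apply, Matrix.add_apply, vecMulVec_apply, Units.val_one, Matrix.one_apply]
    split_ifs <;> simp
  · have hv'' : ∀ i, algebraMap B R (v' i) = algebraMap B R s * v i := fun i => by
      rw [hv', Algebra.smul_def]
    have hF' : (sc r F').map (algebraMap B R) =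
        C (algebraMap B R t) * sc (algebraMap B R r) F := by
      have := RingHom.congr_fun (map_comp_sc (algebraMap B R) r) F'
      simp only [RingHom.comp_apply, coe_mapRingHom] at this
      rw [this, hF, Algebra.smul_def, map_mul]
      simp [Polynomial.algebraMap_apply]
    rw [hεe]
    ext1 i j
    simp only [Matrix.map_apply, Matrix.add_apply, vecMulVec_apply, map_add, map_mul,
      Pi.smul_apply, Pi.sub_apply, smul_eq_mul, map_sub, sc_C, sc_X, coe_mapRingHom,
      Polynomial.map_mul, Polynomial.map_sub, Polynomial.map_add, map_C, map_X, hF', hv'']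
    congr 1
    · simp only [Matrix.one_apply]; split_ifs <;> simp
    · have e1 : ∀ a x, ((Pi.single a (C (v' x)) : Fin n → B[X]) j).map (algebraMap B R)
          = C (algebraMap B R s) * (Pi.single a (C (v x)) : Fin n → R[X]) j := by
        intro a x
        simp only [Pi.single_apply]; split_ifs <;> simp [hv'']
      have e2 : ∀ a x, sc (algebraMap B R r) ((Pi.single a (C (v x)) : Fin n → R[X]) j)
          = (Pi.single a (C (v x)) : Fin n → R[X]) j := by
        intro a x
        simp only [Pi.single_apply]; split_ifs <;> simp
      rw [e1, e1, e2, e2, hr]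
      simp only [map_mul]
      ring

lemma LiftP.conj (hn : 3 ≤ n) (γ : GL (Fin n) R) (i j : Fin n) (hij : i ≠ j) (f : R[X]) :
    LiftP M ((glMap C γ * tvGL i j hij (X * f) * (glMap C γ)⁻¹ : GL (Fin n) R[X]) :
      Matrix (Fin n) (Fin n) R[X]) := by
  set γ' : Matrix (Fin n) (Fin n) R := ((γ⁻¹ : GL (Fin n) R) : Matrix (Fin n) (Fin n) R) with hγ'
  have hmul : γ' * (γ : Matrix (Fin n) (Fin n) R) = 1 := by
    rw [hγ', ← Units.val_mul, inv_mul_cancel, Units.val_one]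
  set v : Fin n → R := fun a => γ a i with hv
  set w : Fin n → R := fun a => γ' j a with hw
  set u : Fin n → R := fun a => γ' i a with hu
  have hwv : w ⬝ᵥ v = 0 := by
    have := congrFun (congrFun hmul j) i
    rwa [Matrix.one_apply_ne hij.symm] at this
  have huv : u ⬝ᵥ v = 1 := by
    have := congrFun (congrFun hmul i) i
    rwa [Matrix.one_apply_eq] at this
  have e : ((glMap C γ * tvGL i j hij (X * f) * (glMap C γ)⁻¹ : GL (Fin n) R[X]) :
      Matrix (Fin n) (Fin n) R[X]) =
      1 + vecMulVec (fun a => C (v a)) ((X * f) • (fun a => C (w a))) := by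
    rw [← map_inv, Units.val_mul, Units.val_mul, coe_glMap, coe_glMap]
    change _ * (1 + Matrix.single i j (X * f)) * _ = _
    rw [mul_add, mul_one, add_mul, ← Matrix.map_mul, ← Units.val_mul, mul_inv_cancel,
      Units.val_one, Matrix.map_one _ (map_zero _) (map_one _),
      ← mul_one (X * f), ← vecMulVec_single_single', mul_vecMulVec, vecMulVec_mul]
    congr 1
    ext1 a b
    simp [vecMulVec_apply, Matrix.mulVec_single, Matrix.single_vecMul, hv, hw, hγ']
    ring
  have hd : ((X * f) • (fun a => C (w a)) : Fin n → R[X]) = ∑ x : Fin n × Fin n,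
      (X * (f * C (w x.1 * u x.2))) •
        (Pi.single x.1 (C (v x.2)) - Pi.single x.2 (C (v x.1)) : Fin n → R[X]) := by
    have := koszul_decomp (fun a => C (v a)) (fun a => C (w a)) (fun a => C (u a))
      (by have := congrArg C hwv; simpa [dotProduct] using this)
      (by have := congrArg C huv; simpa [dotProduct] using this)
    conv_lhs => rw [this]
    rw [Finset.smul_sum]
    refine Finset.sum_congr rfl fun x _ => ?_
    rw [smul_smul]
    simp [mul_assoc]
  rw [e, hd]
  refine sum_right (LiftP M) (LiftP.one M) (fun _ _ => LiftP.mul) _ _ _ ?_ ?_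
  · intro x
    simp [sub_dotProduct, mul_comm]
  · intro x
    exact LiftP.koszul M hn _ v x.1 x.2

lemma LiftP.of_mem (hn : 3 ≤ n) (h : GL (Fin n) R[X]) (hh : h ∈ elemGL n R[X]) :
    ∀ γ : GL (Fin n) R, LiftP M ((glMap C γ * (h * (glMap C (glMap (evalRingHom 0) h))⁻¹) *
      (glMap C γ)⁻¹ : GL (Fin n) R[X]) : Matrix (Fin n) (Fin n) R[X]) := by
  unfold elemGL at hh
  induction hh using Subgroup.closure_induction with
  | mem x hx =>
    intro γ
    obtain ⟨i, j, a, hij, hx⟩ := hx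
    obtain rfl : x = tvGL i j hij a := Units.ext hx
    have e : tvGL i j hij a * (glMap C (glMap (evalRingHom 0) (tvGL i j hij a)))⁻¹
        = tvGL i j hij (X * a.divX) := by
      rw [mul_inv_eq_iff_eq_mul]
      have e2 : glMap C (glMap (evalRingHom 0) (tvGL i j hij a))
          = tvGL i j hij (C (a.coeff 0)) := by
        apply Units.ext
        rw [coe_glMap, coe_glMap]
        change ((1 + Matrix.single i j a).map _).map _ = 1 + Matrix.single i j _
        rw [Matrix.map_add _ (map_add _), Matrix.map_add _ (map_add _),
          Matrix.map_one _ (map_zero _) (map_one _), Matrix.map_one _ (map_zero _) (map_one _),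
          Matrix.map_single, Matrix.map_single]
        simp [coeff_zero_eq_eval_zero]
      rw [e2]
      apply Units.ext
      change transvection i j a = transvection i j _ * transvection i j _
      rw [transvection_mul_transvection_same _ _ hij, X_mul_divX_add]
    rw [e]
    exact LiftP.conj M hn γ i j hij _
  | one => intro γ; simpa using LiftP.one M
  | mul x y _ _ hx hy =>
    intro γ
    have := (hx γ).mul (hy (γ * glMap (evalRingHom 0) x))
    rw [← Units.val_mul] at this
    convert this using 2
    simp only [map_mul]
    group
  | inv x _ hx =>
    intro γ
    have := (hx (γ * (glMap (evalRingHom 0) x)⁻¹)).inv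
    convert this using 2
    simp only [map_mul, map_inv]
    group

/-- Dilation principle. -/
lemma dilation_s13 (hn : 3 ≤ n) (h : GL (Fin n) B[X]) (h0 : glMap (evalRingHom (0 : B)) h = 1)
    (hh : glMap (mapRingHom (algebraMap B R)) h ∈ elemGL n R[X]) :
    ∃ s ∈ M, glMap (sc s) h ∈ elemGL n B[X] := by
  have h1 := LiftP.of_mem M hn _ hh 1
  have h2 : glMap (evalRingHom (0 : R)) (glMap (mapRingHom (algebraMap B R)) h) = 1 := by
    have : (evalRingHom (0 : R)).comp (mapRingHom (algebraMap B R))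
        = (algebraMap B R).comp (evalRingHom 0) := by
      ext a <;> simp
    rw [glMap_glMap, this, ← glMap_glMap, h0, map_one]
  rw [h2] at h1
  simp only [map_one, inv_one, mul_one, one_mul] at h1
  obtain ⟨s, hs, ε, hε, hε0, he⟩ := h1
  -- the difference
  have hz : ∀ x : Fin n × Fin n, ∀ k, algebraMap B R ((ε x.1 x.2 - sc s (h x.1 x.2)).coeff k) = 0 := by
    intro x k
    have e1 := congrFun (congrFun he x.1) x.2
    have e2 := RingHom.congr_fun (map_comp_sc (algebraMap B R) s) (h x.1 x.2)
    simp only [coe_glMap, Matrix.map_apply, RingHom.comp_apply] at e1 e2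
    rw [← coeff_map, ← coe_mapRingHom, map_sub, e1, e2, sub_self, coeff_zero]
  have hc : ∀ x : Fin n × Fin n, ∃ t ∈ M, ∀ k, t * (ε x.1 x.2 - sc s (h x.1 x.2)).coeff k = 0 := by
    intro x
    generalize hp : ε x.1 x.2 - sc s (h x.1 x.2) = p
    have hz' := hz x
    rw [hp] at hz'
    have hz'' := fun k => (IsLocalization.map_eq_zero_iff M R _).1 (hz' k)
    choose t ht using hz''
    refine ⟨∏ k ∈ p.support, (t k : B), prod_mem fun k _ => (t k).2, fun k => ?_⟩
    by_cases hk : k ∈ p.support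
    · rw [← Finset.prod_erase_mul _ _ hk, mul_assoc, ht, mul_zero]
    · rw [notMem_support_iff.1 hk, mul_zero]
  choose t htM ht using hc
  set T := ∏ x, t x with hT
  have hTk : ∀ x : Fin n × Fin n, ∀ k, T * (ε x.1 x.2 - sc s (h x.1 x.2)).coeff k = 0 := by
    intro x k
    rw [hT, ← Finset.prod_erase_mul _ _ (Finset.mem_univ x), mul_assoc, ht, mul_zero]
  refine ⟨T * s, mul_mem (prod_mem fun x _ => htM x) hs, ?_⟩
  have : glMap (sc (T * s)) h = glMap (sc T) ε := by
    rw [← sc_comp, ← glMap_glMap]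
    apply Units.ext
    ext1 i j
    rw [coe_glMap, coe_glMap, coe_glMap, Matrix.map_apply, Matrix.map_apply, Matrix.map_apply,
      eq_comm, ← sub_eq_zero, ← map_sub]
    ext k
    rw [coeff_sc, coeff_zero]
    rcases k with _ | k
    · have a1 : (evalRingHom (0 : B)) (ε i j) = (1 : Matrix (Fin n) (Fin n) B) i j := by
        have := congrArg (fun g : GL (Fin n) B => (g : Matrix (Fin n) (Fin n) B) i j) hε0
        simpa [coe_glMap] using this
      have a2 : (evalRingHom (0 : B)) (h i j) = (1 : Matrix (Fin n) (Fin n) B) i j := by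
        have := congrArg (fun g : GL (Fin n) B => (g : Matrix (Fin n) (Fin n) B) i j) h0
        simpa [coe_glMap] using this
      rw [coeff_sub, coeff_sc, pow_zero, pow_zero, mul_one, mul_one, coeff_zero_eq_eval_zero,
        coeff_zero_eq_eval_zero, ← coe_evalRingHom, a1, a2, sub_self]
    · rw [pow_succ', ← mul_assoc, mul_comm _ T, hTk (i, j), zero_mul]
  rw [this]
  exact glMap_mem _ hε

end Lift

section Patch
variable {n : ℕ} {A : Type*} [CommRing A]

/-- The substitution `X ↦ Y + Z`, from `A[X]` to `A[Y][Z]`. -/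
noncomputable def shiftHom (A : Type*) [CommRing A] : A[X] →+* A[X][X] :=
  eval₂RingHom (C.comp C) (C X + X)

lemma shift_natural {A' : Type*} [CommRing A'] (f : A →+* A') :
    (mapRingHom (mapRingHom f)).comp (shiftHom A) = (shiftHom A').comp (mapRingHom f) := by
  ext a <;> simp [shiftHom]

lemma C_natural {A' : Type*} [CommRing A'] (f : A →+* A') :
    (mapRingHom (mapRingHom f)).comp (C : A[X] →+* A[X][X]) = (C : A'[X] →+* A'[X][X]).comp
      (mapRingHom f) := by
  ext a <;> simp

attribute [local instance] Polynomial.algebra in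
lemma local_step (hn : 3 ≤ n) (g : GL (Fin n) A[X]) (M : Submonoid A) (L : Type*) [CommRing L]
    [Algebra A L] [IsLocalization M L]
    (hloc : glMap (mapRingHom (algebraMap A L)) g ∈ elemGL n L[X]) :
    ∃ s ∈ M, ∀ b c : A, glMap (sc (b + c * s)) g * (glMap (sc b) g)⁻¹ ∈ elemGL n A[X] := by
  set h : GL (Fin n) A[X][X] := glMap (shiftHom A) g * (glMap C g)⁻¹ with hh
  have h0 : glMap (evalRingHom (0 : A[X])) h = 1 := by
    have e : (evalRingHom (0 : A[X])).comp (shiftHom A) = (evalRingHom (0 : A[X])).comp C := by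
      ext a <;> simp [shiftHom]
    rw [hh, map_mul, map_inv, glMap_glMap, glMap_glMap, e, mul_inv_cancel]
  have h1 : glMap (mapRingHom (algebraMap A[X] L[X])) h ∈
      elemGL n L[X][X] := by
    change glMap (mapRingHom (mapRingHom (algebraMap A L))) h ∈ _
    rw [hh, map_mul, map_inv, glMap_glMap, glMap_glMap, shift_natural, C_natural,
      ← glMap_glMap, ← glMap_glMap]
    exact mul_mem (glMap_mem _ hloc) (inv_mem (glMap_mem _ hloc))
  have : IsLocalization (M.map (C : A →+* A[X])) L[X] :=
    Polynomial.isLocalization _ _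
  obtain ⟨_, ⟨s, hs, rfl⟩, hmem⟩ := dilation_s13 (M.map (C : A →+* A[X])) hn h h0 h1
  refine ⟨s, hs, fun b c => ?_⟩
  have := glMap_mem (eval₂RingHom (sc b) (C c * X)) hmem
  rw [hh, map_mul, map_inv, map_mul, map_inv, glMap_glMap, glMap_glMap, glMap_glMap,
    glMap_glMap] at this
  have e1 : ((eval₂RingHom (sc b) (C c * X)).comp (sc (C s))).comp (shiftHom A)
      = sc (b + c * s) := by
    refine Polynomial.ringHom_ext (fun a => by simp [shiftHom]) ?_
    simp [shiftHom]
    ring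
  have e2 : ((eval₂RingHom (sc b) (C c * X)).comp (sc (C s))).comp C = sc b := by
    refine Polynomial.ringHom_ext (fun a => by simp) (by simp)
  rwa [e1, e2] at this

end Patch

end Helpers

/-- Suslin's local-global principle, case `g(0) = 1`: if `g(X) ∈ GL_n(A[X])` has `g(0) = 1`
and becomes elementary over `A_m[X]` for every maximal ideal `m`, then `g(X) ∈ E_n(A[X])`. -/
theorem suslin_local_global_unital (n : ℕ) (hn : 3 ≤ n) (A : Type*) [CommRing A]
    (g : GL (Fin n) (Polynomial A))
    (h0 : glMap (Polynomial.evalRingHom (0 : A)) g = 1)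
    (hloc : ∀ (m : Ideal A) (hm : m.IsMaximal),
      haveI : m.IsPrime := hm.isPrime
      glMap (Polynomial.mapRingHom (algebraMap A (Localization.AtPrime m))) g ∈
        elemGL n (Polynomial (Localization.AtPrime m))) :
    g ∈ elemGL n (Polynomial A) := by
  let Q : Ideal A :=
    { carrier := {a | ∀ b c : A, glMap (sc (b + c * a)) g * (glMap (sc b) g)⁻¹ ∈
        elemGL n (Polynomial A)}
      zero_mem' := by
        intro b c
        rw [mul_zero, add_zero, mul_inv_cancel]
        exact one_mem _
      add_mem' := by
        intro x y hx hy b c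
        have := mul_mem (hy (b + c * x) c) (hx b c)
        rw [mul_assoc, inv_mul_cancel_left, add_assoc, ← mul_add] at this
        exact this
      smul_mem' := by
        intro r x hx b c
        have := hx b (c * r)
        rw [mul_assoc] at this
        exact this }
  have hQ : Q = ⊤ := by
    by_contra hne
    obtain ⟨m, hm, hle⟩ := Ideal.exists_le_maximal Q hne
    have : m.IsPrime := hm.isPrime
    obtain ⟨s, hs, hmem⟩ := local_step hn g m.primeCompl (Localization.AtPrime m) (hloc m hm)
    exact hs (hle hmem)
  have h1 : (1 : A) ∈ Q := by rw [hQ]; trivial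
  have h2 := h1 0 1
  have e1 : sc (0 + 1 * 1 : A) = RingHom.id (Polynomial A) := by
    ext a <;> simp
  have e2 : sc (0 : A) = Polynomial.C.comp (Polynomial.evalRingHom 0) := by
    ext a <;> simp
  rw [e1, e2, ← glMap_glMap, h0, map_one, inv_one, mul_one] at h2
  exact h2
end
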